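/- Let t_0, t_1 > 0 and 1 < B < ∞ be real numbers, and let 𝒟_2^t(B) = { x ∈ (0,1) irrational : a_n(x)^{t_0}·a_{n+1}(x)^{t_1} ≥ B^n for infinitely many n ∈ ℕ }. Then dim_H 𝒟_2^t(B) = inf{ s ∈ [0,1] : limsup_{n→∞} (1/n)·log Σ_{(a_1,…,a_n) ∈ (ℕ≥1)^n} B^{−n·f_{t_0,t_1}(s)}·q_n(a_1,…,a_n)^{−2s} ≤ 0 } (the limsup taken in the extended reals), where f_{t_0}(s) = s/t_0 and f_{t_0,t_1}(s) = s·f_{t_0}(s) / ( t_1·( f_{t_0}(s) + max{0, s/t_1 − (2s−1)/t_0} ) ) for s > 0, with f_{t_0,t_1}(0) = 0. -/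

import Mathlib

open Filter MeasureTheory Set

/-- The Gauss map `T(x) = 1/x - ⌊1/x⌋`. -/
noncomputable def gaussMap (x : ℝ) : ℝ := 1 / x - (⌊1 / x⌋ : ℤ)

/-- The `n`-th partial quotient `a_n(x)` (for `n ≥ 1`) of the continued
fraction expansion of `x`: `a_n(x) = ⌊1 / T^{n-1}(x)⌋`. -/
noncomputable def pq (x : ℝ) (n : ℕ) : ℕ := ⌊1 / (gaussMap^[n - 1] x)⌋₊

/-- The continuant `q_n(a_1, …, a_n)`: `q_0 = 1`, `q_1 = a_1`,
`q_k = a_k q_{k-1} + q_{k-2}`. -/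
def contQ : (n : ℕ) → (Fin n → ℕ) → ℕ
  | 0, _ => 1
  | 1, a => a 0
  | (n + 2), a =>
      a (Fin.last (n + 1)) * contQ (n + 1) (Fin.init a) +
        contQ n (Fin.init (Fin.init a))

/-- `s_B`: the Wang–Wu pressure exponent. -/
noncomputable def sExp (B : ℝ) : ℝ :=
  sInf {s : ℝ | 0 ≤ s ∧
    Filter.atTop.limsup (fun n : ℕ =>
      (((n : ℝ)⁻¹ : ℝ) : EReal) * ENNReal.log (∑' a : Fin n → ℕ+,
        ENNReal.ofReal ((B ^ n * ((contQ n fun i => (a i : ℕ)) : ℝ) ^ 2) ^ (-s)))) ≤ 0}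

/-- `g_{B₁,B₂}`: the two-parameter pressure exponent. -/
noncomputable def gExp (B₁ B₂ : ℝ) : ℝ :=
  sInf {s : ℝ | 0 ≤ s ∧
    Filter.atTop.limsup (fun n : ℕ =>
      (((n : ℝ)⁻¹ : ℝ) : EReal) * ENNReal.log (∑' a : Fin n → ℕ+,
        ENNReal.ofReal (B₂ ^ ((1 - s) * (n : ℝ)) *
          (B₁ ^ n * ((contQ n fun i => (a i : ℕ)) : ℝ) ^ 2) ^ (-s)))) ≤ 0}

/-- `f_{t₀,t₁}(s) = s f_{t₀}(s) / (t₁ (f_{t₀}(s) + max{0, s/t₁ - (2s-1)/t₀}))`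
where `f_{t₀}(s) = s / t₀`, with `f_{t₀,t₁}(0) = 0`. -/
noncomputable def fWeighted (t₀ t₁ s : ℝ) : ℝ :=
  if s = 0 then 0
  else s * (s / t₀) / (t₁ * (s / t₀ + max 0 (s / t₁ - (2 * s - 1) / t₀)))


namespace BHKW

/-- Linear recursion along a word of digits. -/
def V (x y : ℕ) : List ℕ → ℕ × ℕ
  | [] => (x, y)
  | a :: l => ((V x y l).2, a * (V x y l).2 + (V x y l).1)

def P (l : List ℕ) : ℕ := (V 0 1 l).1
def Q (l : List ℕ) : ℕ := (V 0 1 l).2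
def P' (l : List ℕ) : ℕ := (V 1 0 l).1
def Q' (l : List ℕ) : ℕ := (V 1 0 l).2

/-- Inverse branch of the Gauss map iterate along the word. -/
noncomputable def phi : List ℕ → ℝ → ℝ
  | [], y => y
  | a :: l, y => 1 / (a + phi l y)

def Pos (l : List ℕ) : Prop := ∀ a ∈ l, 1 ≤ a

lemma Pos.cons {a : ℕ} {l : List ℕ} (h : Pos (a :: l)) : 1 ≤ a ∧ Pos l :=
  ⟨h a (by simp), fun b hb => h b (by simp [hb])⟩

lemma pos_append {l l' : List ℕ} : Pos (l ++ l') ↔ Pos l ∧ Pos l' := by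
  unfold Pos; constructor
  · intro h; exact ⟨fun a ha => h a (by simp [ha]), fun a ha => h a (by simp [ha])⟩
  · rintro ⟨h1, h2⟩ a ha
    rcases List.mem_append.1 ha with h | h
    · exact h1 a h
    · exact h2 a h

@[simp] lemma P_nil : P [] = 0 := rfl
@[simp] lemma Q_nil : Q [] = 1 := rfl
@[simp] lemma P'_nil : P' [] = 1 := rfl
@[simp] lemma Q'_nil : Q' [] = 0 := rfl
@[simp] lemma P_cons (a : ℕ) (l) : P (a :: l) = Q l := rfl
@[simp] lemma Q_cons (a : ℕ) (l) : Q (a :: l) = a * Q l + P l := rfl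
@[simp] lemma P'_cons (a : ℕ) (l) : P' (a :: l) = Q' l := rfl
@[simp] lemma Q'_cons (a : ℕ) (l) : Q' (a :: l) = a * Q' l + P' l := rfl

lemma PQ_append (l l' : List ℕ) :
    P (l ++ l') = P l * Q l' + P' l * P l' ∧ Q (l ++ l') = Q l * Q l' + Q' l * P l' := by
  induction l with
  | nil => simp
  | cons a l ih =>
    obtain ⟨h1, h2⟩ := ih
    constructor
    · simp [h2]
    · simp only [List.cons_append, Q_cons, Q'_cons, h1, h2]; ring

lemma PQ'_append (l l' : List ℕ) :
    P' (l ++ l') = P l * Q' l' + P' l * P' l' ∧ Q' (l ++ l') = Q l * Q' l' + Q' l * P' l' := by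
  induction l with
  | nil => simp
  | cons a l ih =>
    obtain ⟨h1, h2⟩ := ih
    constructor
    · simp [h2]
    · simp only [List.cons_append, Q_cons, Q'_cons, h1, h2]; ring

lemma Q_basic {l : List ℕ} (h : Pos l) :
    1 ≤ Q l ∧ Q' l ≤ Q l ∧ P' l + Q' l ≤ P l + Q l ∧ P l ≤ Q l := by
  induction l with
  | nil => simp
  | cons a l ih =>
    obtain ⟨ha, hl⟩ := h.cons
    obtain ⟨h1, h2, h3, h4⟩ := ih hl
    obtain ⟨b, rfl⟩ : ∃ b, a = b + 1 := ⟨a - 1, by omega⟩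
    have := Nat.mul_le_mul_left b h2
    simp only [P_cons, Q_cons, P'_cons, Q'_cons]
    refine ⟨?_, ?_, ?_, ?_⟩ <;> nlinarith

lemma Q_pos {l : List ℕ} (h : Pos l) : 0 < Q l := (Q_basic h).1

lemma Q_append_le {l l' : List ℕ} (h : Pos l) (h' : Pos l') :
    Q (l ++ l') ≤ 2 * (Q l * Q l') := by
  rw [(PQ_append l l').2]
  have := Nat.mul_le_mul (Q_basic h).2.1 (Q_basic h').2.2.2
  omega

lemma le_Q_append (l l' : List ℕ) : Q l * Q l' ≤ Q (l ++ l') := by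
  rw [(PQ_append l l').2]; omega

lemma Q_growth : ∀ (l : List ℕ), Pos l → 2 ^ l.length ≤ 2 * (Q l) ^ 2
  | [], _ => by simp
  | [a], h => by
      have := h.cons.1
      simp; nlinarith
  | a :: b :: l, h => by
      obtain ⟨ha, h1⟩ := h.cons
      obtain ⟨hb, h2⟩ := h1.cons
      have ih := Q_growth l h2
      have : 2 * Q l ≤ Q (a :: b :: l) := by
        simp only [Q_cons, P_cons]
        have := Nat.mul_le_mul ha (Nat.le_add_right (b * Q l) (P l))
        have := Nat.mul_le_mul hb (le_refl (Q l))
        nlinarith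
      have h4 := Nat.pow_le_pow_left this 2
      simp only [List.length_cons, pow_succ] at *
      nlinarith

lemma phi_append (l l' : List ℕ) (y : ℝ) : phi (l ++ l') y = phi l (phi l' y) := by
  induction l with
  | nil => rfl
  | cons a l ih => simp [phi, ih]

lemma phi_mem_Icc {l : List ℕ} (h : Pos l) {y : ℝ} (hy : y ∈ Icc (0:ℝ) 1) :
    phi l y ∈ Icc (0:ℝ) 1 := by
  induction l with
  | nil => exact hy
  | cons a l ih =>
    obtain ⟨ha, hl⟩ := h.cons
    obtain ⟨h1, h2⟩ := ih hl
    have ha' : (1:ℝ) ≤ a := by exact_mod_cast ha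
    simp only [phi]
    refine ⟨by positivity, ?_⟩
    rw [div_le_one (by positivity)]; linarith

lemma phi_mem_Ioo {l : List ℕ} (h : Pos l) {y : ℝ} (hy : y ∈ Ioo (0:ℝ) 1) :
    phi l y ∈ Ioo (0:ℝ) 1 := by
  induction l with
  | nil => exact hy
  | cons a l ih =>
    obtain ⟨ha, hl⟩ := h.cons
    obtain ⟨h1, h2⟩ := ih hl
    have ha' : (1:ℝ) ≤ a := by exact_mod_cast ha
    simp only [phi]
    refine ⟨by positivity, ?_⟩
    rw [div_lt_one (by positivity)]; linarith

lemma phi_mem_Ioo' {l : List ℕ} (h : Pos l) (hlen : 2 ≤ l.length) {y : ℝ}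
    (hy : y ∈ Icc (0:ℝ) 1) : phi l y ∈ Ioo (0:ℝ) 1 := by
  match l, hlen with
  | a :: b :: l, _ =>
    obtain ⟨ha, h1⟩ := h.cons
    obtain ⟨hb, h2⟩ := h1.cons
    obtain ⟨h3, h4⟩ := phi_mem_Icc h2 hy
    have ha' : (1:ℝ) ≤ a := by exact_mod_cast ha
    have hb' : (1:ℝ) ≤ b := by exact_mod_cast hb
    simp only [phi]
    have : 0 < 1 / ((b:ℝ) + phi l y) := by positivity
    refine ⟨by positivity, ?_⟩
    rw [div_lt_one (by positivity)]; linarith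

lemma phi_formula {l : List ℕ} (h : Pos l) {y : ℝ} (hy : y ∈ Icc (0:ℝ) 1) :
    phi l y * (Q l + Q' l * y) = P l + P' l * y := by
  induction l with
  | nil => simp [phi]
  | cons a l ih =>
    obtain ⟨ha, hl⟩ := h.cons
    have ih := ih hl
    have h1 := (phi_mem_Icc hl hy).1
    have ha' : (1:ℝ) ≤ a := by exact_mod_cast ha
    simp only [phi, Q_cons, Q'_cons, P_cons, P'_cons]
    push_cast
    have : (a:ℝ) + phi l y ≠ 0 := by positivity
    rw [div_mul_eq_mul_div, div_eq_iff this]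
    linear_combination -ih

lemma phi_dist {l : List ℕ} (h : Pos l) {y z : ℝ} (hy : y ∈ Icc (0:ℝ) 1)
    (hz : z ∈ Icc (0:ℝ) 1) :
    |phi l y - phi l z| * ((Q l + Q' l * y) * (Q l + Q' l * z)) = |y - z| := by
  induction l with
  | nil => simp [phi]
  | cons a l ih =>
    obtain ⟨ha, hl⟩ := h.cons
    have ih := ih hl
    have h1 := (phi_mem_Icc hl hy).1
    have h2 := (phi_mem_Icc hl hz).1
    have f1 := phi_formula hl hy
    have f2 := phi_formula hl hz
    have ha' : (1:ℝ) ≤ a := by exact_mod_cast ha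
    have e1 : ((Q (a :: l) : ℕ) : ℝ) + (Q' (a :: l) : ℕ) * y
        = (Q l + Q' l * y) * (a + phi l y) := by
      simp only [Q_cons, Q'_cons]; push_cast; linear_combination -f1
    have e2 : ((Q (a :: l) : ℕ) : ℝ) + (Q' (a :: l) : ℕ) * z
        = (Q l + Q' l * z) * (a + phi l z) := by
      simp only [Q_cons, Q'_cons]; push_cast; linear_combination -f2
    rw [e1, e2, ← ih]
    have p1 : 0 < (a:ℝ) + phi l y := by positivity
    have p2 : 0 < (a:ℝ) + phi l z := by positivity
    have e3 : phi (a :: l) y - phi (a :: l) z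
        = -(phi l y - phi l z) / ((a + phi l y) * (a + phi l z)) := by
      simp only [phi]; field_simp; ring
    rw [e3, abs_div, abs_neg, abs_of_pos (mul_pos p1 p2)]
    field_simp

lemma phi_dist_le {l : List ℕ} (h : Pos l) {y z : ℝ} (hy : y ∈ Icc (0:ℝ) 1)
    (hz : z ∈ Icc (0:ℝ) 1) : |phi l y - phi l z| ≤ |y - z| / (Q l : ℝ) ^ 2 := by
  have hQ : (1:ℝ) ≤ Q l := by exact_mod_cast Q_pos h
  rw [le_div_iff₀ (by positivity), ← phi_dist h hy hz]
  apply mul_le_mul_of_nonneg_left _ (abs_nonneg _)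
  have a1 : 0 ≤ (Q' l : ℝ) * y := mul_nonneg (by positivity) hy.1
  have a2 : 0 ≤ (Q' l : ℝ) * z := mul_nonneg (by positivity) hz.1
  nlinarith

lemma le_phi_dist {l : List ℕ} (h : Pos l) {y z : ℝ} (hy : y ∈ Icc (0:ℝ) 1)
    (hz : z ∈ Icc (0:ℝ) 1) : |y - z| ≤ |phi l y - phi l z| * (4 * (Q l : ℝ) ^ 2) := by
  have hQ : (1:ℝ) ≤ Q l := by exact_mod_cast Q_pos h
  have hQ' : (Q' l : ℝ) ≤ Q l := by exact_mod_cast (Q_basic h).2.1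
  rw [← phi_dist h hy hz]
  apply mul_le_mul_of_nonneg_left _ (abs_nonneg _)
  have a1 : 0 ≤ (Q' l : ℝ) * y := mul_nonneg (by positivity) hy.1
  have a2 : 0 ≤ (Q' l : ℝ) * z := mul_nonneg (by positivity) hz.1
  have b1 : (Q' l : ℝ) * y ≤ Q l := (mul_le_of_le_one_right (by positivity) hy.2).trans hQ'
  have b2 : (Q' l : ℝ) * z ≤ Q l := (mul_le_of_le_one_right (by positivity) hz.2).trans hQ'
  calc _ ≤ (2 * (Q l : ℝ)) * (2 * (Q l : ℝ)) := by gcongr <;> linarith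
    _ = _ := by ring

lemma contQ_eq : ∀ (n : ℕ) (a : Fin n → ℕ), contQ n a = Q (List.ofFn a)
  | 0, a => by simp [contQ]
  | 1, a => by simp [contQ]
  | n + 2, a => by
      rw [contQ, contQ_eq (n+1), contQ_eq n, List.ofFn_succ' a, List.concat_eq_append,
        (PQ_append _ _).2]
      have e : (List.ofFn fun i : Fin (n+1) => a i.castSucc) = List.ofFn (Fin.init a) := rfl
      rw [e]
      have : Q' (List.ofFn (Fin.init a)) = Q (List.ofFn (Fin.init (Fin.init a))) := by
        rw [List.ofFn_succ' (Fin.init a), List.concat_eq_append, (PQ'_append _ _).2]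
        have e : (List.ofFn fun i : Fin n => (Fin.init a : Fin (n+1) → ℕ) i.castSucc)
          = List.ofFn (Fin.init (Fin.init a)) := rfl
        rw [e]; simp
      rw [this]; simp [mul_comm]

lemma gauss_phi_cons {a : ℕ} (ha : 1 ≤ a) {l : List ℕ} {y : ℝ} (hy : phi l y ∈ Ioo (0:ℝ) 1) :
    gaussMap (phi (a :: l) y) = phi l y ∧ ⌊1 / phi (a :: l) y⌋₊ = a := by
  have e : 1 / phi (a :: l) y = a + phi l y := by simp [phi]
  have h : ⌊1 / phi (a :: l) y⌋₊ = a := by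
    rw [e, Nat.floor_eq_iff (by have := hy.1; positivity)]
    constructor <;> linarith [hy.1, hy.2]
  refine ⟨?_, h⟩
  have h2 : ⌊1 / phi (a :: l) y⌋ = (a : ℤ) := by
    rw [e, Int.floor_eq_iff]; push_cast
    constructor <;> linarith [hy.1, hy.2]
  unfold gaussMap
  rw [h2, e]; push_cast; ring

lemma gauss_iter_phi {l : List ℕ} (h : Pos l) {y : ℝ} (hy : y ∈ Ioo (0:ℝ) 1) :
    gaussMap^[l.length] (phi l y) = y := by
  induction l with
  | nil => rfl
  | cons a l ih =>
    obtain ⟨ha, hl⟩ := h.cons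
    rw [List.length_cons, Function.iterate_succ_apply, (gauss_phi_cons ha (phi_mem_Ioo hl hy)).1,
      ih hl]

lemma pq_phi {l l' : List ℕ} {a : ℕ} (h : Pos (l ++ a :: l')) {y : ℝ} (hy : y ∈ Ioo (0:ℝ) 1) :
    pq (phi (l ++ a :: l') y) (l.length + 1) = a := by
  obtain ⟨h1, h2⟩ := pos_append.1 h
  unfold pq
  rw [Nat.add_sub_cancel, phi_append, gauss_iter_phi h1 (phi_mem_Ioo h2 hy)]
  exact (gauss_phi_cons h2.cons.1 (phi_mem_Ioo h2.cons.2 hy)).2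

lemma phi_inj : ∀ {l l' : List ℕ} (_ : Pos l) (_ : Pos l') (_ : l.length = l'.length) {y z : ℝ}
    (_ : y ∈ Ioo (0:ℝ) 1) (_ : z ∈ Ioo (0:ℝ) 1) (_ : phi l y = phi l' z), l = l'
  | [], [], _, _, _, _, _, _, _, _ => rfl
  | a :: l, b :: l', h, h', hlen, y, z, hy, hz, e => by
      have g1 := gauss_phi_cons h.cons.1 (phi_mem_Ioo h.cons.2 hy)
      have g2 := gauss_phi_cons h'.cons.1 (phi_mem_Ioo h'.cons.2 hz)
      have e1 : a = b := by rw [← g1.2, ← g2.2, e]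
      have e2 : phi l y = phi l' z := by rw [← g1.1, ← g2.1, e]
      rw [e1, phi_inj h.cons.2 h'.cons.2 (by simpa using hlen) hy hz e2]

lemma phi_continuousOn {l : List ℕ} (h : Pos l) : ContinuousOn (phi l) (Icc 0 1) := by
  induction l with
  | nil => exact continuousOn_id
  | cons a l ih =>
    obtain ⟨ha, hl⟩ := h.cons
    have : phi (a :: l) = fun y => 1 / ((a:ℝ) + phi l y) := by funext y; rfl
    rw [this]
    apply ContinuousOn.div continuousOn_const (continuousOn_const.add (ih hl))
    intro y hy
    have := (phi_mem_Icc hl hy).1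
    have ha' : (1:ℝ) ≤ a := by exact_mod_cast ha
    exact ne_of_gt (by linarith : (0:ℝ) < a + phi l y)

/-- If `x = φ_l(y)` for words with unbounded denominators then `x` is irrational. -/
lemma irrational_of {x : ℝ} (h : ∀ M : ℕ, ∃ l y, Pos l ∧ y ∈ Ioo (0:ℝ) 1 ∧ x = phi l y ∧ M ≤ Q l) :
    Irrational x := by
  rintro ⟨r, hr⟩
  obtain ⟨l, y, hl, hy, hx, hQ⟩ := h (r.den + 1)
  have hQ1 : (1:ℝ) ≤ Q l := by exact_mod_cast Q_pos hl
  have hd : (0:ℝ) < r.den := by exact_mod_cast r.den_pos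
  have h0 : (0:ℝ) ∈ Icc (0:ℝ) 1 := by simp
  have hy' : y ∈ Icc (0:ℝ) 1 := ⟨hy.1.le, hy.2.le⟩
  have e0 : phi l 0 = P l / Q l := by
    have := phi_formula hl h0
    rw [eq_div_iff (by positivity)]; simpa using this
  have d1 := phi_dist_le hl hy' h0
  have d2 := le_phi_dist hl hy' h0
  rw [← hx, e0, ← hr] at d1 d2
  have er : (r:ℝ) = r.num / r.den := by exact_mod_cast (Rat.num_div_den r).symm
  have e1 : (r:ℝ) - P l / Q l = ((r.num * Q l - P l * r.den : ℤ) : ℝ) / (r.den * Q l) := by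
    rw [er]; push_cast; field_simp
  have hne : (r.num * Q l - P l * r.den : ℤ) ≠ 0 := by
    intro h
    rw [e1, h] at d2
    simp at d2
    exact hy.1.ne' d2
  have h1 : (1:ℝ) ≤ |((r.num * Q l - P l * r.den : ℤ) : ℝ)| := by
    exact_mod_cast Int.one_le_abs hne
  rw [e1, abs_div, abs_of_pos (by positivity : (0:ℝ) < r.den * Q l), sub_zero, abs_of_pos hy.1] at d1
  have h2 : 1 / ((r.den : ℝ) * Q l) ≤ 1 / (Q l : ℝ) ^ 2 :=
    (by gcongr : 1 / ((r.den : ℝ) * Q l) ≤ _).trans (d1.trans (by gcongr; exact hy.2.le))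
  rw [div_le_div_iff_of_pos_left one_pos (by positivity) (by positivity)] at h2
  have h3 : (Q l : ℝ) ≤ r.den := by nlinarith
  have : Q l ≤ r.den := by exact_mod_cast h3
  omega

/-- digits of an irrational -/
lemma gauss_irr {x : ℝ} (hx : x ∈ Ioo (0:ℝ) 1) (hi : Irrational x) :
    gaussMap x ∈ Ioo (0:ℝ) 1 ∧ Irrational (gaussMap x) ∧ 1 ≤ ⌊1 / x⌋₊ ∧
      x = 1 / (⌊1 / x⌋₊ + gaussMap x) := by
  have h1 : 1 < 1 / x := by rw [lt_div_iff₀ hx.1]; linarith [hx.2]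
  have hirr : Irrational (gaussMap x) := by
    unfold gaussMap
    rw [one_div]; exact (hi.inv).sub_intCast _
  have e : gaussMap x = Int.fract (1 / x) := rfl
  have hf : (⌊1 / x⌋₊ : ℝ) = (⌊1/x⌋ : ℤ) := by
    exact natCast_floor_eq_intCast_floor (by linarith)
  refine ⟨⟨?_, ?_⟩, hirr, ?_, ?_⟩
  · refine lt_of_le_of_ne (e ▸ Int.fract_nonneg _) ?_
    intro h; rw [← h] at hirr; exact hirr ⟨0, by simp⟩
  · rw [e]; exact Int.fract_lt_one _
  · exact Nat.le_floor (by simpa using h1.le)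
  · rw [hf]; unfold gaussMap; simp

lemma irr_expand {x : ℝ} (hx : x ∈ Ioo (0:ℝ) 1) (hi : Irrational x) (n : ℕ) :
    gaussMap^[n] x ∈ Ioo (0:ℝ) 1 ∧ Irrational (gaussMap^[n] x) ∧
    (∀ i, 1 ≤ pq x (i+1)) ∧
    x = phi (List.ofFn (fun i : Fin n => pq x (i + 1))) (gaussMap^[n] x) := by
  induction n generalizing x with
  | zero =>
    have key : ∀ i, gaussMap^[i] x ∈ Ioo (0:ℝ) 1 ∧ Irrational (gaussMap^[i] x) := by
      intro i
      induction i with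
      | zero => exact ⟨hx, hi⟩
      | succ i ih =>
        rw [Function.iterate_succ_apply']
        have := gauss_irr ih.1 ih.2
        exact ⟨this.1, this.2.1⟩
    refine ⟨hx, hi, ?_, by simp [phi]⟩
    intro i
    exact (gauss_irr (key i).1 (key i).2).2.2.1
  | succ n ih =>
    have g := gauss_irr hx hi
    obtain ⟨h1, h2, h3, h4⟩ := ih g.1 g.2.1
    rw [Function.iterate_succ_apply]
    have hp : ∀ i, pq (gaussMap x) (i+1) = pq x (i + 1 + 1) := by
      intro i; simp only [pq, Nat.add_sub_cancel, Function.iterate_succ_apply]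
    refine ⟨h1, h2, ?_, ?_⟩
    · intro i
      rcases i with _ | i
      · exact g.2.2.1
      · rw [← hp]; exact h3 i
    · rw [List.ofFn_succ]
      simp only [phi]
      have e2 : (List.ofFn fun i : Fin n => pq x (i.succ + 1))
          = List.ofFn (fun i : Fin n => pq (gaussMap x) (i + 1)) := by
        congr 1
      rw [e2, ← h4]
      exact g.2.2.2

end BHKW


namespace BHKW
open scoped ENNReal NNReal Topology

lemma hcantelli {ι : ℕ → Type} [∀ n, Countable (ι n)] (U : ∀ n, ι n → Set ℝ) {s : ℝ} (hs : 0 < s)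
    (c : ℕ → ℝ≥0∞) (hc : ∑' n, c n ≠ ⊤)
    (h : ∀ᶠ n in atTop, ∑' i, Metric.ediam (U n i) ^ s ≤ c n) :
    μH[s] {x | ∃ᶠ n in atTop, ∃ i, x ∈ U n i} = 0 := by
  have ht : Tendsto (fun M => ∑' n, c (n + M)) atTop (𝓝 0) := ENNReal.tendsto_sum_nat_add c hc
  obtain ⟨M0, hM0⟩ := eventually_atTop.1 h
  have hr : Tendsto (fun M => (∑' n, c (n + M)) ^ (1 / s)) atTop (𝓝 0) := by
    have := (ENNReal.continuous_rpow_const (y := 1 / s)).tendsto 0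
    rw [ENNReal.zero_rpow_of_pos (by positivity)] at this
    exact this.comp ht
  have key := Measure.hausdorffMeasure_le_liminf_tsum s {x | ∃ᶠ n in atTop, ∃ i, x ∈ U n i}
    (ι := fun M => Σ n : ℕ, ι (n + M))
    (l := atTop) _ hr (fun M p => U (p.1 + M) p.2) (by
      filter_upwards [eventually_ge_atTop M0] with M hM
      rintro ⟨n, i⟩
      rw [one_div, ENNReal.le_rpow_inv_iff hs]
      calc _ ≤ ∑' i, Metric.ediam (U (n + M) i) ^ s :=
            ENNReal.le_tsum (f := fun i => Metric.ediam (U (n + M) i) ^ s) i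
        _ ≤ c (n + M) := hM0 _ (by omega)
        _ ≤ _ := ENNReal.le_tsum (f := fun n => c (n + M)) n) (by
      refine Eventually.of_forall fun M x hx => ?_
      obtain ⟨n, hn, i, hi⟩ := (frequently_atTop.1 hx) M
      obtain ⟨k, rfl⟩ := Nat.exists_eq_add_of_le' hn
      exact mem_iUnion.2 ⟨⟨k, i⟩, hi⟩)
  refine le_antisymm (key.trans ?_) zero_le
  have h2 : liminf (fun M => ∑' p : (Σ n : ℕ, ι (n + M)), Metric.ediam (U (p.1 + M) p.2) ^ s) atTop
      ≤ liminf (fun M => ∑' n, c (n + M)) atTop := by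
    refine liminf_le_liminf ?_
    filter_upwards [eventually_ge_atTop M0] with M hM
    rw [ENNReal.tsum_sigma (fun (n : ℕ) (i : ι (n + M)) => Metric.ediam (U (n + M) i) ^ s)]
    exact ENNReal.tsum_le_tsum fun n => hM0 _ (by omega)
  rw [ht.liminf_eq] at h2
  exact h2

/-! ### The weight function -/

lemma fW_eq {t₀ t₁ s : ℝ} (ht₀ : 0 < t₀) (ht₁ : 0 < t₁) (hs : 0 < s) :
    fWeighted t₀ t₁ s = s * s / (t₁ * s + max 0 (t₁ * (1 - 2 * s) + s * t₀)) := by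
  unfold fWeighted
  rw [if_neg hs.ne']
  have e : max 0 (s / t₁ - (2 * s - 1) / t₀)
      = max 0 (t₁ * (1 - 2 * s) + s * t₀) / (t₁ * t₀) := by
    rw [← max_div_div_right (by positivity), zero_div]
    congr 1; field_simp; ring
  rw [e]
  have hm : 0 ≤ max 0 (t₁ * (1 - 2 * s) + s * t₀) := le_max_left _ _
  have : t₁ * (s / t₀ + max 0 (t₁ * (1 - 2 * s) + s * t₀) / (t₁ * t₀))
     = (t₁ * s + max 0 (t₁ * (1 - 2 * s) + s * t₀)) / t₀ := by field_simp
  rw [this]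
  have : 0 < t₁ * s + max 0 (t₁ * (1 - 2 * s) + s * t₀) := by positivity
  field_simp

lemma fW_nonneg {t₀ t₁ s : ℝ} (ht₀ : 0 < t₀) (ht₁ : 0 < t₁) (hs : 0 ≤ s) :
    0 ≤ fWeighted t₀ t₁ s := by
  rcases hs.eq_or_lt with rfl | hs
  · simp [fWeighted]
  · rw [fW_eq ht₀ ht₁ hs]; positivity

lemma fW_mono {t₀ t₁ s s' : ℝ} (ht₀ : 0 < t₀) (ht₁ : 0 < t₁) (hs : 0 ≤ s) (h : s ≤ s') :
    fWeighted t₀ t₁ s ≤ fWeighted t₀ t₁ s' := by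
  rcases hs.eq_or_lt with rfl | hs
  · have := fW_nonneg ht₀ ht₁ h
    simpa [fWeighted] using this
  have hs' : 0 < s' := hs.trans_le h
  rw [fW_eq ht₀ ht₁ hs, fW_eq ht₀ ht₁ hs']
  have m1 : 0 ≤ max 0 (t₁ * (1 - 2 * s) + s * t₀) := le_max_left _ _
  have m2 : 0 ≤ max 0 (t₁ * (1 - 2 * s') + s' * t₀) := le_max_left _ _
  rw [div_le_div_iff₀ (by positivity) (by positivity)]
  have key : s * max 0 (t₁ * (1 - 2 * s') + s' * t₀) ≤ s' * max 0 (t₁ * (1 - 2 * s) + s * t₀) := by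
    rw [mul_max_of_nonneg _ _ hs.le]
    apply max_le
    · nlinarith
    · have := mul_le_mul_of_nonneg_left (le_max_right 0 (t₁ * (1 - 2 * s) + s * t₀)) hs'.le
      nlinarith
  have h3 : s * (s * max 0 (t₁ * (1 - 2 * s') + s' * t₀))
      ≤ s' * (s' * max 0 (t₁ * (1 - 2 * s) + s * t₀)) :=
    mul_le_mul h key (by positivity) hs'.le
  have h4 : t₁ * (s * s') * s ≤ t₁ * (s * s') * s' := mul_le_mul_of_nonneg_left h (by positivity)
  nlinarith

lemma param_upper {t₀ t₁ s : ℝ} (ht₀ : 0 < t₀) (ht₁ : 0 < t₁) (hs : 0 < s) (hs1 : s < 1) :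
    ∃ κ : ℝ, 0 ≤ κ ∧ fWeighted t₀ t₁ s ≤ κ * s ∧
      fWeighted t₀ t₁ s + max 0 (1 - 2 * s + s * t₀ / t₁) * κ ≤ s / t₁ := by
  have hd : 0 < t₁ * (1 - s) + s * t₀ := by have : 0 < 1 - s := by linarith
                                            positivity
  refine ⟨s / (t₁ * (1 - s) + s * t₀), by positivity, ?_, ?_⟩
  · rw [fW_eq ht₀ ht₁ hs, div_mul_eq_mul_div]
    apply div_le_div_of_nonneg_left (by positivity) hd
    have := le_max_right 0 (t₁ * (1 - 2 * s) + s * t₀)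
    nlinarith
  · have e : 1 - 2 * s + s * t₀ / t₁ = (t₁ * (1 - 2 * s) + s * t₀) / t₁ := by field_simp
    rw [fW_eq ht₀ ht₁ hs, e]
    rcases le_total 0 (t₁ * (1 - 2 * s) + s * t₀) with h | h
    · rw [max_eq_right h, max_eq_right (by positivity)]
      have : t₁ * s + (t₁ * (1 - 2 * s) + s * t₀) = t₁ * (1 - s) + s * t₀ := by ring
      rw [this]
      apply le_of_eq
      field_simp; ring
    · rw [max_eq_left h, max_eq_left (div_nonpos_of_nonpos_of_nonneg h ht₁.le)]
      apply le_of_eq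
      field_simp; ring

lemma param_lower {t₀ t₁ s : ℝ} (ht₀ : 0 < t₀) (ht₁ : 0 < t₁) (hs : 0 < s) (hs1 : s < 1) :
    ∃ κ δ : ℝ, 0 ≤ κ ∧ 0 < δ ∧ κ * t₀ + δ * t₁ = 1 ∧ κ * s ≤ fWeighted t₀ t₁ s ∧
      (2 * s - 1) * κ + s * δ ≤ fWeighted t₀ t₁ s := by
  have h1s : 0 < 1 - s := by linarith
  have hd : 0 < t₁ * (1 - s) + s * t₀ := by positivity
  rw [fW_eq ht₀ ht₁ hs]
  rcases le_total 0 (t₁ * (1 - 2 * s) + s * t₀) with h | h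
  · rw [max_eq_right h]
    have : t₁ * s + (t₁ * (1 - 2 * s) + s * t₀) = t₁ * (1 - s) + s * t₀ := by ring
    rw [this]
    refine ⟨s / (t₁ * (1 - s) + s * t₀), (1 - s) / (t₁ * (1 - s) + s * t₀), by positivity,
      by positivity, ?_, ?_, ?_⟩
    · field_simp; ring
    · apply le_of_eq; field_simp
    · apply le_of_eq; field_simp; ring
  · rw [max_eq_left h]
    refine ⟨0, 1 / t₁, le_rfl, by positivity, ?_, ?_, ?_⟩
    · field_simp; ring
    · rw [zero_mul]; positivity
    · apply le_of_eq; field_simp; ring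

/-! ### Extended-real logarithms -/

lemma le_exp_of_log {n : ℕ} (hn : 1 ≤ n) {Z : ℝ≥0∞} {c : ℝ}
    (h : (((n : ℝ)⁻¹ : ℝ) : EReal) * ENNReal.log Z < (c : EReal)) :
    Z ≤ ENNReal.ofReal (Real.exp (c * n)) := by
  have hn' : (0:ℝ) < n := by exact_mod_cast hn
  have hi : (0:ℝ) < (n:ℝ)⁻¹ := by positivity
  rcases eq_or_ne Z 0 with rfl | h0
  · exact zero_le
  rcases eq_or_ne Z ⊤ with rfl | ht
  · rw [ENNReal.log_top, EReal.coe_mul_top_of_pos hi] at h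
    exact absurd h (by simp)
  rw [ENNReal.log_pos_real h0 ht, ← EReal.coe_mul, EReal.coe_lt_coe_iff] at h
  have hz : 0 < Z.toReal := ENNReal.toReal_pos h0 ht
  rw [← ENNReal.ofReal_toReal ht]
  apply ENNReal.ofReal_le_ofReal
  rw [← Real.log_le_iff_le_exp hz]
  rw [inv_mul_lt_iff₀ hn'] at h
  linarith

lemma exp_lt_of_log {n : ℕ} (hn : 1 ≤ n) {Z : ℝ≥0∞} {c : ℝ}
    (h : (c : EReal) < (((n : ℝ)⁻¹ : ℝ) : EReal) * ENNReal.log Z) :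
    ENNReal.ofReal (Real.exp (c * n)) < Z := by
  have hn' : (0:ℝ) < n := by exact_mod_cast hn
  have hi : (0:ℝ) < (n:ℝ)⁻¹ := by positivity
  rcases eq_or_ne Z 0 with rfl | h0
  · rw [ENNReal.log_zero, EReal.coe_mul_bot_of_pos hi] at h
    exact absurd h (by simp)
  rcases eq_or_ne Z ⊤ with rfl | ht
  · exact ENNReal.ofReal_lt_top
  rw [ENNReal.log_pos_real h0 ht, ← EReal.coe_mul, EReal.coe_lt_coe_iff] at h
  have hz : 0 < Z.toReal := ENNReal.toReal_pos h0 ht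
  rw [← ENNReal.ofReal_toReal ht, ENNReal.ofReal_lt_ofReal_iff hz]
  rw [← Real.lt_log_iff_exp_lt hz]
  rw [lt_inv_mul_iff₀ hn'] at h
  linarith

/-- If the pressure is positive, the partition functions are large infinitely often. -/
lemma large_of_pressure {Z : ℕ → ℝ≥0∞}
    (h : ¬ Filter.atTop.limsup (fun n : ℕ => (((n : ℝ)⁻¹ : ℝ) : EReal) * ENNReal.log (Z n)) ≤ 0)
    (T : ℝ) (M : ℕ) : ∃ n, M ≤ n ∧ ENNReal.ofReal T < Z n := by
  rw [not_le] at h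
  obtain ⟨c, hc0, hc⟩ := EReal.lt_iff_exists_real_btwn.1 h
  have hc0' : 0 < c := by exact_mod_cast hc0
  have hf := frequently_lt_of_lt_limsup (by isBoundedDefault) hc
  have hev : ∀ᶠ n : ℕ in atTop, T ≤ Real.exp (c * n) :=
    (Real.tendsto_exp_atTop.comp
      (tendsto_natCast_atTop_atTop.const_mul_atTop hc0')).eventually_ge_atTop T
  obtain ⟨n, hn, h1, h2, h3⟩ :=
    (hf.and_eventually (hev.and ((eventually_ge_atTop 1).and (eventually_ge_atTop M)))).exists
  exact ⟨n, h3, (ENNReal.ofReal_le_ofReal h1).trans_lt (exp_lt_of_log h2 hn)⟩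

lemma small_of_pressure {Z : ℕ → ℝ≥0∞}
    (h : Filter.atTop.limsup (fun n : ℕ => (((n : ℝ)⁻¹ : ℝ) : EReal) * ENNReal.log (Z n)) ≤ 0)
    {ε : ℝ} (hε : 0 < ε) : ∀ᶠ n : ℕ in atTop, Z n ≤ ENNReal.ofReal (Real.exp (ε * n)) := by
  have : Filter.atTop.limsup (fun n : ℕ => (((n : ℝ)⁻¹ : ℝ) : EReal) * ENNReal.log (Z n))
      < (ε : EReal) := h.trans_lt (by exact_mod_cast hε)
  filter_upwards [eventually_lt_of_limsup_lt this, eventually_ge_atTop 1] with n h1 h2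
  exact le_exp_of_log h2 h1

end BHKW


namespace BHKW
open scoped ENNReal NNReal Topology

/-- The word attached to a finite tuple of digits. -/
def wd {n : ℕ} (a : Fin n → ℕ+) : List ℕ := List.ofFn fun i => (a i : ℕ)

lemma wd_pos {n : ℕ} (a : Fin n → ℕ+) : Pos (wd a) := by
  intro b hb
  simp only [wd, List.mem_ofFn] at hb
  obtain ⟨i, rfl⟩ := hb
  exact (a i).pos

lemma wd_length {n : ℕ} (a : Fin n → ℕ+) : (wd a).length = n := by simp [wd]

/-- The partition function. -/
noncomputable def Z (t₀ t₁ B s : ℝ) (n : ℕ) : ℝ≥0∞ := ∑' a : Fin n → ℕ+,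
          ENNReal.ofReal (B ^ (-(n : ℝ) * fWeighted t₀ t₁ s) *
            ((contQ n fun i => (a i : ℕ)) : ℝ) ^ (-(2 * s)))

lemma Z_eq (t₀ t₁ B s : ℝ) (n : ℕ) : Z t₀ t₁ B s n = ∑' a : Fin n → ℕ+,
          ENNReal.ofReal (B ^ (-(n : ℝ) * fWeighted t₀ t₁ s) * (Q (wd a) : ℝ) ^ (-(2 * s))) := by
  simp only [Z, contQ_eq, wd]

lemma Q_growth_real {l : List ℕ} (h : Pos l) : (2:ℝ) ^ l.length ≤ 2 * (Q l : ℝ) ^ 2 := by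
  exact_mod_cast Q_growth l h

lemma Z_decay {t₀ t₁ B s s' : ℝ} (ht₀ : 0 < t₀) (ht₁ : 0 < t₁) (hB : 1 < B) (hs : 0 ≤ s)
    (hss : s < s')
    (h : Filter.atTop.limsup (fun n : ℕ => (((n : ℝ)⁻¹ : ℝ) : EReal) *
      ENNReal.log (Z t₀ t₁ B s n)) ≤ 0) :
    ∃ ε > 0, ∃ C > 0, ∀ᶠ m : ℕ in atTop,
      Z t₀ t₁ B s' m ≤ ENNReal.ofReal (C * Real.exp (-ε * m)) := by
  set η := s' - s with hη
  have hη0 : 0 < η := by linarith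
  have hl2 : 0 < Real.log 2 := Real.log_pos (by norm_num)
  refine ⟨η * Real.log 2 / 2, by positivity, 2 ^ η, by positivity, ?_⟩
  filter_upwards [small_of_pressure h (ε := η * Real.log 2 / 2) (by positivity)] with m hm
  have key : Z t₀ t₁ B s' m ≤
      Z t₀ t₁ B s m * ENNReal.ofReal (2 ^ η * Real.exp (-(η * Real.log 2) * m)) := by
    rw [Z_eq, Z_eq, ← ENNReal.tsum_mul_right]
    refine ENNReal.tsum_le_tsum fun a => ?_
    rw [← ENNReal.ofReal_mul (by positivity)]
    apply ENNReal.ofReal_le_ofReal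
    have hQ : (0:ℝ) < Q (wd a) := by exact_mod_cast Q_pos (wd_pos a)
    have g := Q_growth_real (wd_pos a)
    rw [wd_length] at g
    have e1 : (Q (wd a) : ℝ) ^ (-(2 * s'))
        = (Q (wd a) : ℝ) ^ (-(2 * s)) * ((Q (wd a) : ℝ) ^ 2) ^ (-η) := by
      rw [← Real.rpow_natCast, ← Real.rpow_mul hQ.le, ← Real.rpow_add hQ]
      congr 1; rw [hη]; push_cast; ring
    have e2 : ((Q (wd a) : ℝ) ^ 2) ^ (-η) ≤ 2 ^ η * Real.exp (-(η * Real.log 2) * m) := by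
      have : ((Q (wd a) : ℝ) ^ 2) ^ (-η) ≤ ((2:ℝ) ^ m / 2) ^ (-η) :=
        Real.rpow_le_rpow_of_nonpos (by positivity) (by linarith) (by linarith)
      refine this.trans (le_of_eq ?_)
      rw [Real.div_rpow (by positivity) (by norm_num), Real.rpow_neg (by norm_num : (0:ℝ) ≤ 2),
        div_inv_eq_mul, mul_comm, ← Real.rpow_natCast, ← Real.rpow_mul (by norm_num),
        Real.rpow_def_of_pos (by norm_num : (0:ℝ) < 2) (m * -η)]
      congr 2; ring
    rw [e1]
    calc _ ≤ B ^ (-(m:ℝ) * fWeighted t₀ t₁ s) * ((Q (wd a) : ℝ) ^ (-(2 * s)) *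
          (2 ^ η * Real.exp (-(η * Real.log 2) * m))) := by
          have hm0 := mul_le_mul_of_nonneg_left (fW_mono ht₀ ht₁ hs hss.le) (Nat.cast_nonneg (α := ℝ) m)
          have hBm : B ^ (-(m:ℝ) * fWeighted t₀ t₁ s') ≤ B ^ (-(m:ℝ) * fWeighted t₀ t₁ s) :=
            Real.rpow_le_rpow_of_exponent_le hB.le (by linarith)
          exact mul_le_mul hBm (mul_le_mul_of_nonneg_left e2 (by positivity)) (by positivity)
            (by positivity)
      _ = _ := by ring
  refine key.trans ((mul_le_mul_left hm _).trans (le_of_eq ?_))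
  rw [← ENNReal.ofReal_mul (by positivity)]
  congr 1
  rw [mul_left_comm, ← Real.exp_add]
  congr 2; ring

lemma ediam_phi {l : List ℕ} (h : Pos l) {r : ℝ} (hr : 0 ≤ r) :
    Metric.ediam (phi l '' {y | y ∈ Icc (0:ℝ) 1 ∧ y ≤ r}) ≤ ENNReal.ofReal (r / (Q l : ℝ) ^ 2) := by
  apply Metric.ediam_le
  rintro _ ⟨y, ⟨hy, hyr⟩, rfl⟩ _ ⟨z, ⟨hz, hzr⟩, rfl⟩
  rw [edist_dist, Real.dist_eq]
  apply ENNReal.ofReal_le_ofReal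
  refine (phi_dist_le h hy hz).trans ?_
  gcongr
  rw [abs_le]; constructor <;> linarith [hy.1, hz.1]

lemma harm_bound {α : ℝ} (hα : 1 ≤ α) :
    ∑' k : ℕ+, (if (k : ℝ) ≤ α then ENNReal.ofReal (1 / (k : ℝ)) else 0)
      ≤ ENNReal.ofReal (1 + Real.log α) := by
  set g : ℕ → ℝ≥0∞ := fun n => if n ∈ Finset.Icc 1 ⌊α⌋₊ then ENNReal.ofReal (1 / (n:ℝ)) else 0
    with hg
  calc _ ≤ ∑' k : ℕ+, g k := by
        refine ENNReal.tsum_le_tsum fun k => ?_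
        split_ifs with h
        · have : (k:ℕ) ∈ Finset.Icc 1 ⌊α⌋₊ := Finset.mem_Icc.2 ⟨k.pos, Nat.le_floor h⟩
          simp only [hg, this, if_true]; exact le_rfl
        · exact zero_le
    _ ≤ ∑' n, g n := ENNReal.tsum_comp_le_tsum_of_injective PNat.coe_injective g
    _ = ∑ n ∈ Finset.Icc 1 ⌊α⌋₊, g n := tsum_eq_sum (fun n hn => by simp only [hg, hn, if_false])
    _ = ∑ n ∈ Finset.Icc 1 ⌊α⌋₊, ENNReal.ofReal (1 / (n:ℝ)) :=
        Finset.sum_congr rfl (fun n hn => by simp only [hg, hn, if_true])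
    _ = ENNReal.ofReal (∑ n ∈ Finset.Icc 1 ⌊α⌋₊, 1 / (n:ℝ)) :=
        (ENNReal.ofReal_sum_of_nonneg fun i _ => by positivity).symm
    _ ≤ _ := by
        apply ENNReal.ofReal_le_ofReal
        have := harmonic_floor_le_one_add_log α hα
        rw [harmonic_eq_sum_Icc] at this
        simpa using this

/-- The set in the theorem. -/
def DD (t₀ t₁ B : ℝ) : Set ℝ := {x : ℝ | x ∈ Set.Ioo (0 : ℝ) 1 ∧ Irrational x ∧
      {n : ℕ | B ^ n ≤ (pq x n : ℝ) ^ t₀ * (pq x (n + 1) : ℝ) ^ t₁}.Infinite}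

lemma upper_term1 {B κ s f q : ℝ} {m : ℕ} (hB : 1 < B) (hs : 0 < s) (hq : 0 < q) (hf : 0 ≤ f)
    (hκ : f ≤ κ * s) :
    (1 / B ^ (κ * (m + 1)) / q ^ 2) ^ s ≤ B ^ (-(m : ℝ) * f) * q ^ (-(2 * s)) := by
  have hB0 : 0 < B := by linarith
  rw [Real.div_rpow (by positivity) (by positivity), one_div, ← Real.rpow_neg hB0.le,
    ← Real.rpow_mul hB0.le, ← Real.rpow_natCast, ← Real.rpow_mul hq.le, div_eq_mul_inv,
    ← Real.rpow_neg hq.le]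
  push_cast
  refine mul_le_mul_of_nonneg_right (Real.rpow_le_rpow_of_exponent_le hB.le ?_) (by positivity)
  have : (0:ℝ) ≤ m := by positivity
  nlinarith

lemma upper_term2 {B κ s f q t₀ t₁ k : ℝ} {m : ℕ} (hB : 1 < B) (hs : 0 < s)
    (hq : 0 < q) (hf : 0 ≤ f) (hκ0 : 0 ≤ κ) (hk : 1 ≤ k) (hkα : k ≤ B ^ (κ * (m + 1)))
    (hκ : f + max 0 (1 - 2 * s + s * t₀ / t₁) * κ ≤ s / t₁) :
    ((k ^ t₀ / B ^ (m + 1)) ^ (1 / t₁) / (q * k) ^ 2) ^ s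
      ≤ B ^ (-(m : ℝ) * f) * q ^ (-(2 * s)) * (1 / k) := by
  have hB0 : 0 < B := by linarith
  have hk0 : 0 < k := by linarith
  set e := 1 - 2 * s + s * t₀ / t₁ with he
  have e1 : ((k ^ t₀ / B ^ (m + 1)) ^ (1 / t₁) / (q * k) ^ 2) ^ s
      = B ^ (-((m:ℝ) + 1) * (s / t₁)) * q ^ (-(2 * s)) * (k ^ e * (1 / k)) := by
    rw [← Real.rpow_natCast B, ← Real.rpow_natCast (q * k), Real.div_rpow (by positivity) (by positivity),
      Real.div_rpow (by positivity) (by positivity), Real.div_rpow (by positivity) (by positivity),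
      Real.mul_rpow hq.le hk0.le, Real.mul_rpow (by positivity) (by positivity)]
    simp only [← Real.rpow_mul hk0.le, ← Real.rpow_mul hB0.le, ← Real.rpow_mul hq.le]
    rw [one_div k, ← Real.rpow_neg_one k, ← Real.rpow_add hk0]
    simp only [div_eq_mul_inv, ← Real.rpow_neg hk0.le, ← Real.rpow_neg hB0.le,
      ← Real.rpow_neg hq.le, mul_inv]
    have : k ^ (e + -1) = k ^ (t₀ * (1 * t₁⁻¹) * s) * k ^ (-(((2:ℕ):ℝ) * s)) := by
      rw [← Real.rpow_add hk0]; congr 1; rw [he]; push_cast; ring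
    rw [this]
    have : B ^ (-((((m + 1 : ℕ) : ℝ)) * (1 * t₁⁻¹) * s)) = B ^ (-((m:ℝ) + 1) * (s * t₁⁻¹)) := by
      congr 1; push_cast; ring
    rw [this]; push_cast; ring
  have e2 : k ^ e ≤ B ^ (κ * (m + 1) * max 0 e) := by
    calc k ^ e ≤ k ^ (max 0 e) := Real.rpow_le_rpow_of_exponent_le hk (le_max_right _ _)
      _ ≤ (B ^ (κ * (m + 1))) ^ (max 0 e) := Real.rpow_le_rpow hk0.le hkα (le_max_left _ _)
      _ = _ := by rw [← Real.rpow_mul hB0.le]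
  rw [e1]
  have e3 : B ^ (-((m:ℝ) + 1) * (s / t₁)) * B ^ (κ * (m + 1) * max 0 e) ≤ B ^ (-(m:ℝ) * f) := by
    rw [← Real.rpow_add hB0]
    apply Real.rpow_le_rpow_of_exponent_le hB.le
    have : (0:ℝ) ≤ m := by positivity
    nlinarith
  calc _ ≤ B ^ (-((m:ℝ) + 1) * (s / t₁)) * q ^ (-(2 * s)) *
        (B ^ (κ * (m + 1) * max 0 e) * (1 / k)) := by gcongr
    _ = (B ^ (-((m:ℝ) + 1) * (s / t₁)) * B ^ (κ * (m + 1) * max 0 e)) * q ^ (-(2 * s)) * (1 / k) := by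
        ring
    _ ≤ _ := by gcongr

lemma upper_measure {t₀ t₁ B s s' : ℝ} (ht₀ : 0 < t₀) (ht₁ : 0 < t₁) (hB : 1 < B) (hs : 0 ≤ s)
    (hss : s < s') (hs1 : s' < 1)
    (h : Filter.atTop.limsup (fun n : ℕ => (((n : ℝ)⁻¹ : ℝ) : EReal) *
      ENNReal.log (Z t₀ t₁ B s n)) ≤ 0) :
    μH[s'] (DD t₀ t₁ B) = 0 := by
  have hs' : 0 < s' := by linarith
  have hB0 : 0 < B := by linarith
  obtain ⟨ε, hε, C, hC, hdec⟩ := Z_decay ht₀ ht₁ hB hs hss h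
  obtain ⟨κ, hκ0, hκ1, hκ2⟩ := param_upper ht₀ ht₁ hs' hs1
  have hf := fW_nonneg ht₀ ht₁ hs'.le
  set f := fWeighted t₀ t₁ s' with hfdef
  set α : ℕ → ℝ := fun m => B ^ (κ * (m + 1)) with hα
  have hα1 : ∀ m, 1 ≤ α m := fun m => Real.one_le_rpow hB.le (by positivity)
  set U1 : ∀ m : ℕ, (Fin m → ℕ+) → Set ℝ := fun m a =>
    phi (wd a) '' {y | y ∈ Icc (0:ℝ) 1 ∧ y ≤ 1 / α m} with hU1
  set U2 : ∀ m : ℕ, ((Fin m → ℕ+) × ℕ+) → Set ℝ := fun m p =>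
    if (p.2 : ℝ) ≤ α m then phi (wd p.1 ++ [(p.2 : ℕ)]) '' {y | y ∈ Icc (0:ℝ) 1 ∧
      y ≤ (((p.2 : ℕ) : ℝ) ^ t₀ / B ^ (m + 1)) ^ (1 / t₁)} else ∅ with hU2
  have s0 : Summable fun m : ℕ => C * Real.exp (-ε * m) := by
    have := Real.summable_pow_mul_exp_neg_nat_mul 0 hε
    simpa using this.mul_left C
  have s1 : Summable fun m : ℕ => C * Real.exp (-ε * m) * (1 + Real.log (α m)) := by
    have h0 := Real.summable_pow_mul_exp_neg_nat_mul 0 hε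
    have h1 := Real.summable_pow_mul_exp_neg_nat_mul 1 hε
    have := (h0.mul_left (C * (1 + κ * Real.log B))).add (h1.mul_left (C * (κ * Real.log B)))
    refine this.congr fun m => ?_
    simp only [hα, Real.log_rpow hB0]; ring
  have z1 : μH[s'] {x | ∃ᶠ m in atTop, ∃ i, x ∈ U1 m i} = 0 := by
    refine hcantelli U1 hs' _ s0.tsum_ofReal_ne_top ?_
    filter_upwards [hdec] with m hm
    refine le_trans ?_ hm
    rw [Z_eq]
    refine ENNReal.tsum_le_tsum fun a => ?_
    have hQ : (0:ℝ) < Q (wd a) := by exact_mod_cast Q_pos (wd_pos a)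
    have hp : (0:ℝ) < α m := by linarith [hα1 m]
    calc _ ≤ (ENNReal.ofReal (1 / α m / (Q (wd a) : ℝ) ^ 2)) ^ s' :=
          ENNReal.rpow_le_rpow (ediam_phi (wd_pos a) (by positivity)) hs'.le
      _ = ENNReal.ofReal ((1 / α m / (Q (wd a) : ℝ) ^ 2) ^ s') :=
          ENNReal.ofReal_rpow_of_nonneg (by positivity) hs'.le
      _ ≤ _ := ENNReal.ofReal_le_ofReal (upper_term1 hB hs' hQ hf hκ1)
  have z2 : μH[s'] {x | ∃ᶠ m in atTop, ∃ i, x ∈ U2 m i} = 0 := by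
    refine hcantelli U2 hs' _ s1.tsum_ofReal_ne_top ?_
    filter_upwards [hdec] with m hm
    have hlog : 0 ≤ 1 + Real.log (α m) := by have := Real.log_nonneg (hα1 m); linarith
    rw [ENNReal.ofReal_mul (by positivity)]
    refine le_trans ?_ (mul_le_mul' hm (harm_bound (hα1 m)))
    rw [Z_eq, ← ENNReal.tsum_mul_right, ENNReal.tsum_prod']
    refine ENNReal.tsum_le_tsum fun a => ?_
    rw [← ENNReal.tsum_mul_left]
    refine ENNReal.tsum_le_tsum fun k => ?_
    have hQ : (0:ℝ) < Q (wd a) := by exact_mod_cast Q_pos (wd_pos a)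
    have hk1 : (1:ℝ) ≤ (k:ℕ) := by exact_mod_cast k.pos
    have hk0 : (0:ℝ) < (k:ℕ) := by linarith
    simp only [hU2]
    split_ifs with hk
    · have hpos : Pos (wd a ++ [(k:ℕ)]) := pos_append.2 ⟨wd_pos a, by
        intro b hb; rw [List.mem_singleton] at hb; rw [hb]; exact k.pos⟩
      have hQ2 : (Q (wd a) : ℝ) * (k:ℕ) ≤ Q (wd a ++ [(k:ℕ)]) := by
        have := le_Q_append (wd a) [(k:ℕ)]
        simp at this
        exact_mod_cast this
      have hr : 0 ≤ (((k:ℕ) : ℝ) ^ t₀ / B ^ (m + 1)) ^ (1 / t₁) := by positivity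
      calc _ ≤ (ENNReal.ofReal ((((k:ℕ) : ℝ) ^ t₀ / B ^ (m + 1)) ^ (1 / t₁)
              / (Q (wd a ++ [(k:ℕ)]) : ℝ) ^ 2)) ^ s' :=
            ENNReal.rpow_le_rpow (ediam_phi hpos hr) hs'.le
        _ ≤ (ENNReal.ofReal ((((k:ℕ) : ℝ) ^ t₀ / B ^ (m + 1)) ^ (1 / t₁)
              / ((Q (wd a) : ℝ) * (k:ℕ)) ^ 2)) ^ s' := by
            refine ENNReal.rpow_le_rpow (ENNReal.ofReal_le_ofReal ?_) hs'.le
            gcongr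
        _ = ENNReal.ofReal (((((k:ℕ) : ℝ) ^ t₀ / B ^ (m + 1)) ^ (1 / t₁)
              / ((Q (wd a) : ℝ) * (k:ℕ)) ^ 2) ^ s') :=
            ENNReal.ofReal_rpow_of_nonneg (by positivity) hs'.le
        _ ≤ _ := ENNReal.ofReal_le_ofReal (upper_term2 hB hs' hQ hf hκ0 hk1 hk hκ2)
        _ = _ := ENNReal.ofReal_mul (by positivity)
    · simp [hs']
  refine measure_mono_null ?_ (measure_union_null z1 z2)
  rintro x ⟨hx, hi, hinf⟩
  have hfr : ∃ᶠ m : ℕ in atTop, (∃ i, x ∈ U1 m i) ∨ (∃ i, x ∈ U2 m i) := by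
    rw [frequently_atTop]
    intro M
    obtain ⟨n, hn, hnM⟩ := hinf.exists_gt M
    obtain ⟨m, rfl⟩ : ∃ m, n = m + 1 := ⟨n - 1, by omega⟩
    refine ⟨m, by omega, ?_⟩
    obtain ⟨y0, -, hd, ex⟩ := irr_expand hx hi m
    obtain ⟨z0, -, -, ex2⟩ := irr_expand hx hi (m + 1)
    have hz0 := irr_expand hx hi (m + 2)
    set a : Fin m → ℕ+ := fun i => ⟨pq x (i + 1), hd i⟩ with ha
    have ewd : wd a = List.ofFn (fun i : Fin m => pq x (i + 1)) := rfl
    have bd : ∀ j, gaussMap^[j] x ≤ 1 / (pq x (j + 1) : ℝ) := by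
      intro j
      have hj := (irr_expand hx hi j).1
      have hp : (0:ℝ) < pq x (j+1) := by exact_mod_cast hd j
      have : (pq x (j + 1) : ℝ) ≤ 1 / gaussMap^[j] x := by
        unfold pq; rw [Nat.add_sub_cancel]
        exact Nat.floor_le (by have := hj.1; positivity)
      rw [le_div_iff₀ hj.1] at this
      rw [le_div_iff₀ hp]; linarith
    rcases le_or_gt (pq x (m + 1) : ℝ) (α m) with hle | hgt
    · right
      obtain ⟨k, hk⟩ : ∃ k : ℕ+, (k:ℕ) = pq x (m + 1) := ⟨⟨_, hd m⟩, rfl⟩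
      refine ⟨(a, k), ?_⟩
      simp only [hU2]
      rw [if_pos (by rw [hk]; exact hle), hk]
      refine ⟨gaussMap^[m + 1] x, ⟨⟨z0.1.le, z0.2.le⟩, ?_⟩, ?_⟩
      · refine (bd (m + 1)).trans ?_
        have hp : (0:ℝ) < pq x (m + 1) := by exact_mod_cast hd m
        have hp2 : (0:ℝ) < pq x (m + 1 + 1) := by exact_mod_cast hd (m + 1)
        have hn' : B ^ (m + 1) ≤ (pq x (m + 1) : ℝ) ^ t₀ * (pq x (m + 1 + 1) : ℝ) ^ t₁ := hn
        rw [one_div t₁, Real.le_rpow_inv_iff_of_pos (by positivity) (by positivity) ht₁,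
          Real.div_rpow (by norm_num) hp2.le, Real.one_rpow,
          div_le_div_iff₀ (by positivity) (by positivity)]
        linarith
      · rw [ewd]
        conv_rhs => rw [ex2]
        rw [List.ofFn_succ', List.concat_eq_append]
        rfl
    · left
      refine ⟨a, gaussMap^[m] x, ⟨⟨y0.1.le, y0.2.le⟩, ?_⟩, ?_⟩
      · refine (bd m).trans ?_
        have hp : (0:ℝ) < α m := by linarith [hα1 m]
        exact one_div_le_one_div_of_le hp hgt.le
      · rw [ewd]; exact ex.symm
  exact frequently_or_distrib.1 hfr

/-- The pressure at `s = 1` is nonpositive. -/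
lemma pressure_one {t₀ t₁ B : ℝ} (ht₀ : 0 < t₀) (ht₁ : 0 < t₁) (hB : 1 < B) :
    Filter.atTop.limsup (fun n : ℕ => (((n : ℝ)⁻¹ : ℝ) : EReal) *
      ENNReal.log (Z t₀ t₁ B 1 n)) ≤ 0 := by
  by_contra hcon
  obtain ⟨n, -, hn⟩ := large_of_pressure hcon 8 0
  refine absurd hn (not_lt.2 ?_)
  have hq : (1/4:ℝ) ∈ Ioo (0:ℝ) 1 := by norm_num
  have hq' : (3/4:ℝ) ∈ Ioo (0:ℝ) 1 := by norm_num
  set J : (Fin n → ℕ+) → Set ℝ := fun a => uIcc (phi (wd a) (1/4)) (phi (wd a) (3/4)) with hJ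
  have hsub : ∀ a, J a ⊆ phi (wd a) '' Ioo 0 1 := by
    intro a
    have : uIcc (1/4:ℝ) (3/4) ⊆ Ioo 0 1 := by
      rw [uIcc_of_le (by norm_num)]; intro x hx
      exact ⟨by linarith [hx.1], by linarith [hx.2]⟩
    refine (intermediate_value_uIcc ?_).trans (image_mono this)
    exact (phi_continuousOn (wd_pos a)).mono (this.trans Ioo_subset_Icc_self)
  have hdisj : Pairwise (Function.onFun Disjoint J) := by
    intro a b hab
    refine Set.disjoint_left.2 fun x hx hx' => hab ?_
    obtain ⟨y, hy, rfl⟩ := hsub a hx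
    obtain ⟨z, hz, e⟩ := hsub b hx'
    have := phi_inj (wd_pos b) (wd_pos a) (by simp [wd_length]) hz hy e
    have h2 := List.ofFn_injective this
    funext i
    exact PNat.coe_injective (congrFun h2 i).symm
  have hvol : ∑' a, volume (J a) ≤ 1 := by
    rw [← measure_iUnion hdisj (fun a => measurableSet_uIcc)]
    calc _ ≤ volume (Icc (0:ℝ) 1) := by
          apply measure_mono
          refine iUnion_subset fun a => (hsub a).trans ?_
          rintro _ ⟨y, hy, rfl⟩
          exact Ioo_subset_Icc_self (phi_mem_Ioo (wd_pos a) hy)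
      _ = 1 := by simp
  calc Z t₀ t₁ B 1 n ≤ ∑' a, ENNReal.ofReal 8 * volume (J a) := by
        rw [Z_eq]
        refine ENNReal.tsum_le_tsum fun a => ?_
        simp only [hJ]
        rw [Real.volume_interval, ← ENNReal.ofReal_mul (by norm_num)]
        apply ENNReal.ofReal_le_ofReal
        have hQ : (0:ℝ) < Q (wd a) := by exact_mod_cast Q_pos (wd_pos a)
        have d := le_phi_dist (wd_pos a) (Ioo_subset_Icc_self hq') (Ioo_subset_Icc_self hq)
        have e : |(3/4:ℝ) - 1/4| = 1/2 := by norm_num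
        rw [e] at d
        have e2 : (Q (wd a) : ℝ) ^ (-(2 * (1:ℝ))) = 1 / (Q (wd a) : ℝ) ^ 2 := by
          rw [Real.rpow_neg hQ.le, one_div]; norm_num
        have e3 : B ^ (-(n:ℝ) * fWeighted t₀ t₁ 1) ≤ 1 := by
          apply Real.rpow_le_one_of_one_le_of_nonpos hB.le
          have := fW_nonneg ht₀ ht₁ zero_le_one
          have : 0 ≤ (n:ℝ) * fWeighted t₀ t₁ 1 := by positivity
          linarith
        rw [e2]
        calc _ ≤ 1 * (1 / (Q (wd a) : ℝ) ^ 2) := by gcongr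
          _ ≤ _ := by
            rw [one_mul, div_le_iff₀ (by positivity)]
            nlinarith
    _ = ENNReal.ofReal 8 * ∑' a, volume (J a) := ENNReal.tsum_mul_left
    _ ≤ ENNReal.ofReal 8 * 1 := by gcongr
    _ = _ := mul_one _

end BHKW


namespace BHKW
open scoped ENNReal NNReal Topology

/-- Admissible blocks: positive words starting with `1, 1`. -/
def Blk (l : List ℕ) : Prop := ∃ u, Pos u ∧ l = 1 :: 1 :: u

lemma Blk.pos {l : List ℕ} (h : Blk l) : Pos l := by
  obtain ⟨u, hu, rfl⟩ := h
  intro a ha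
  simp only [List.mem_cons] at ha
  rcases ha with rfl | rfl | ha
  · exact le_rfl
  · exact le_rfl
  · exact hu a ha

lemma Blk.len {l : List ℕ} (h : Blk l) : 2 ≤ l.length := by
  obtain ⟨u, hu, rfl⟩ := h
  simp

lemma Blk.two_le {l : List ℕ} (h : Blk l) : 2 ≤ Q l := by
  have h1 := Q_growth l h.pos
  have h2 : 2 ^ 2 ≤ 2 ^ l.length := Nat.pow_le_pow_right (by norm_num) h.len
  by_contra hc
  have : Q l ≤ 1 := by omega
  have : Q l ^ 2 ≤ 1 := by nlinarith
  omega

lemma Blk.mem {l : List ℕ} (h : Blk l) {y : ℝ} (hy : y ∈ Icc (0:ℝ) 1) :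
    phi l y ∈ Icc (1/2:ℝ) (2/3) := by
  obtain ⟨u, hu, rfl⟩ := h
  have ht := phi_mem_Icc hu hy
  simp only [phi, Nat.cast_one]
  set t := phi u y
  have h1 : 0 < 1 + t := by linarith [ht.1]
  have h2 : 0 < 2 + t := by linarith [ht.1]
  have h3 : 1 + t + 1 ≠ 0 := by linarith
  have e : 1 / (1 + 1 / (1 + t)) = (1 + t) / (2 + t) := by
    rw [div_eq_div_iff (by positivity) h2.ne']; field_simp; ring
  rw [e]
  constructor
  · rw [div_le_div_iff₀ (by norm_num) h2]; linarith [ht.1]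
  · rw [div_le_div_iff₀ h2 (by norm_num)]; linarith [ht.2]

/-- Concatenation of the first `k` blocks. -/
def pre (w : ℕ → List ℕ) : ℕ → List ℕ
  | 0 => []
  | k + 1 => pre w k ++ w k

def sh (k : ℕ) (w : ℕ → List ℕ) : ℕ → List ℕ := fun i => w (k + i)

lemma pre_add (w : ℕ → List ℕ) (k j : ℕ) : pre w (k + j) = pre w k ++ pre (sh k w) j := by
  induction j with
  | zero => simp [pre]
  | succ j ih =>
    show pre w (k + j) ++ w (k + j) = _
    rw [ih]; simp [pre, sh]

lemma pre_congr {w w' : ℕ → List ℕ} {k : ℕ} (h : ∀ i < k, w i = w' i) : pre w k = pre w' k := by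
  induction k with
  | zero => rfl
  | succ k ih =>
    simp only [pre]
    rw [ih fun i hi => h i (by omega), h k (by omega)]

lemma pre_pos {w : ℕ → List ℕ} (hw : ∀ k, Blk (w k)) (k : ℕ) : Pos (pre w k) := by
  induction k with
  | zero => intro a ha; simp [pre] at ha
  | succ k ih => exact pos_append.2 ⟨ih, (hw k).pos⟩

lemma pre_Q {w : ℕ → List ℕ} (hw : ∀ k, Blk (w k)) (k : ℕ) : 2 ^ k ≤ Q (pre w k) := by
  induction k with
  | zero => simp [pre]
  | succ k ih =>
    calc 2 ^ (k + 1) = 2 ^ k * 2 := pow_succ _ _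
      _ ≤ Q (pre w k) * Q (w k) := Nat.mul_le_mul ih (hw k).two_le
      _ ≤ _ := le_Q_append _ _

/-- The point coded by a sequence of blocks. -/
noncomputable def pt (w : ℕ → List ℕ) : ℝ := limUnder atTop fun k => phi (pre w k) 0

lemma pt_tendsto {w : ℕ → List ℕ} (hw : ∀ k, Blk (w k)) :
    Tendsto (fun k => phi (pre w k) 0) atTop (𝓝 (pt w)) := by
  have h0 : (0:ℝ) ∈ Icc (0:ℝ) 1 := by norm_num
  have hc : CauchySeq fun k => phi (pre w k) 0 := by
    refine cauchySeq_of_le_geometric (1/2) 1 (by norm_num) fun k => ?_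
    rw [Real.dist_eq]
    have e : phi (pre w (k+1)) 0 = phi (pre w k) (phi (w k) 0) := phi_append _ _ _
    rw [e]
    have hm := phi_mem_Icc (hw k).pos h0
    refine (phi_dist_le (pre_pos hw k) h0 hm).trans ?_
    have hQ : (2:ℝ) ^ k ≤ Q (pre w k) := by exact_mod_cast pre_Q hw k
    have h2 : (1:ℝ) ≤ 2 ^ k := one_le_pow₀ (by norm_num)
    rw [one_div_pow, one_mul]
    apply div_le_div₀ (by norm_num) _ (by positivity) (by nlinarith)
    rw [zero_sub, abs_neg, abs_of_nonneg hm.1]; exact hm.2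
  exact hc.tendsto_limUnder

lemma pt_Icc {w : ℕ → List ℕ} (hw : ∀ k, Blk (w k)) : pt w ∈ Icc (0:ℝ) 1 :=
  isClosed_Icc.mem_of_tendsto (pt_tendsto hw)
    (Eventually.of_forall fun k => phi_mem_Icc (pre_pos hw k) (by norm_num))

lemma pt_sh {w : ℕ → List ℕ} (hw : ∀ k, Blk (w k)) (k : ℕ) :
    pt w = phi (pre w k) (pt (sh k w)) := by
  have hw' : ∀ j, Blk (sh k w j) := fun j => hw _
  have h1 : Tendsto (fun j => phi (pre w (j + k)) 0) atTop (𝓝 (pt w)) :=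
    (tendsto_add_atTop_iff_nat (f := fun j => phi (pre w j) 0) k).2 (pt_tendsto hw)
  have h2 : Tendsto (fun j => phi (pre w k) (phi (pre (sh k w) j) 0)) atTop
      (𝓝 (phi (pre w k) (pt (sh k w)))) := by
    have hc := phi_continuousOn (pre_pos hw k) (pt (sh k w)) (pt_Icc hw')
    refine hc.tendsto.comp (tendsto_nhdsWithin_iff.2 ⟨pt_tendsto hw', ?_⟩)
    exact Eventually.of_forall fun j => phi_mem_Icc (pre_pos hw' j) (by norm_num)
  refine tendsto_nhds_unique h1 (h2.congr fun j => ?_)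
  rw [add_comm j k, pre_add, phi_append]

lemma pt_mem {w : ℕ → List ℕ} (hw : ∀ k, Blk (w k)) : pt w ∈ Icc (1/2:ℝ) (2/3) := by
  rw [pt_sh hw 1]
  have e : pre w 1 = w 0 := by simp [pre]
  rw [e]
  exact (hw 0).mem (pt_Icc fun j => hw _)

lemma Icc_sub {y : ℝ} (h : y ∈ Icc (1/2:ℝ) (2/3)) : y ∈ Ioo (0:ℝ) 1 :=
  ⟨by linarith [h.1], by linarith [h.2]⟩

lemma pt_irr {w : ℕ → List ℕ} (hw : ∀ k, Blk (w k)) : Irrational (pt w) := by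
  refine irrational_of fun M => ⟨pre w M, pt (sh M w), pre_pos hw M,
    Icc_sub (pt_mem fun j => hw _), pt_sh hw M, ?_⟩
  exact (Nat.lt_two_pow_self).le.trans (pre_Q hw M)

instance instMSList : MeasurableSpace (List ℕ) := ⊤
instance instDMSList : DiscreteMeasurableSpace (List ℕ) := ⟨fun _ => trivial⟩

lemma pre_meas (k : ℕ) : Measurable fun w : ℕ → List ℕ => pre w k := by
  induction k with
  | zero => exact measurable_const
  | succ k ih =>
    have h1 : Measurable fun w : ℕ → List ℕ => (pre w k, w k) := ih.prodMk (measurable_pi_apply k)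
    have h2 : Measurable fun p : List ℕ × List ℕ => p.1 ++ p.2 := Measurable.of_discrete
    exact h2.comp h1

/-- The distribution of a single block. -/
noncomputable def nu (W : Finset (List ℕ)) (p : List ℕ → ℝ) : Measure (List ℕ) :=
  ∑ l ∈ W, ENNReal.ofReal (p l) • Measure.dirac l

lemma nu_apply (W : Finset (List ℕ)) (p : List ℕ → ℝ) (hp : ∀ l, 0 ≤ p l) (A : Finset (List ℕ))
    (hA : A ⊆ W) : nu W p A = ENNReal.ofReal (∑ l ∈ A, p l) := by
  classical
  rw [ENNReal.ofReal_sum_of_nonneg fun i _ => hp i]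
  simp only [nu, Measure.coe_finsetSum, Finset.sum_apply, Measure.smul_apply, smul_eq_mul,
    Measure.dirac_apply, Set.indicator_apply, Finset.mem_coe, Pi.one_apply, mul_ite, mul_one,
    mul_zero]
  rw [← Finset.sum_filter, Finset.filter_mem_eq_inter, Finset.inter_eq_right.2 hA]

theorem mass_dist {s C : ℝ} (hs : 0 < s) (hC : 0 < C) (W : ℕ → Finset (List ℕ))
    (p : ℕ → List ℕ → ℝ) (hW : ∀ k, ∀ l ∈ W k, Blk l) (hp : ∀ k l, 0 ≤ p k l)
    (hsum : ∀ k, ∑ l ∈ W k, p k l = 1)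
    (h0 : ∀ w : ℕ → List ℕ, (∀ k, w k ∈ W k) →
      Tendsto (fun k => ∏ i ∈ Finset.range k, p i (w i)) atTop (𝓝 0))
    (h1 : ∀ w : ℕ → List ℕ, (∀ k, w k ∈ W k) → ∀ k, ∀ A ⊆ W k, A.Nontrivial → ∀ d : ℝ, 0 ≤ d →
      (∀ l ∈ A, ∀ l' ∈ A, ∃ z ∈ Icc (1/2:ℝ) (2/3), ∃ z' ∈ Icc (1/2:ℝ) (2/3),
        |phi (pre w k) (phi l z) - phi (pre w k) (phi l' z')| ≤ d) →
      (∏ i ∈ Finset.range k, p i (w i)) * ∑ l ∈ A, p k l ≤ C * d ^ s)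
    (D : Set ℝ) (hD : ∀ w : ℕ → List ℕ, (∀ k, w k ∈ W k) → pt w ∈ D) :
    ENNReal.ofReal s ≤ dimH D := by
  classical
  have nuP : ∀ k, IsProbabilityMeasure (nu (W k) (p k)) := by
    intro k
    constructor
    have h1 : nu (W k) (p k) (W k) = 1 := by
      rw [nu_apply _ _ (hp k) _ (Finset.Subset.refl _), hsum]; simp
    refine le_antisymm ?_ (h1 ▸ measure_mono (subset_univ _))
    simp only [nu, Measure.coe_finsetSum, Finset.sum_apply, Measure.smul_apply, smul_eq_mul,
      measure_univ, mul_one]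
    rw [← ENNReal.ofReal_sum_of_nonneg fun i _ => hp k i, hsum]; simp
  set μ : Measure (ℕ → List ℕ) := Measure.infinitePi fun k => nu (W k) (p k) with hμ
  have hcyl : ∀ (n : ℕ) (t : ℕ → Finset (List ℕ)), (∀ i, t i ⊆ W i) →
      μ {w | ∀ i < n, w i ∈ t i} = ENNReal.ofReal (∏ i ∈ Finset.range n, ∑ l ∈ t i, p i l) := by
    intro n t ht
    have e : {w : ℕ → List ℕ | ∀ i < n, w i ∈ t i} =
        Set.pi (Finset.range n) (fun i => (t i : Set (List ℕ))) := by
      ext w; simp [Set.mem_pi]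
    rw [e, hμ, Measure.infinitePi_pi _ (fun i _ => MeasurableSet.of_discrete)]
    rw [ENNReal.ofReal_prod_of_nonneg fun i _ => Finset.sum_nonneg fun l _ => hp i l]
    exact Finset.prod_congr rfl fun i _ => nu_apply _ _ (hp i) _ (ht i)
  have hae : ∀ᵐ w ∂μ, ∀ k, w k ∈ W k := by
    rw [ae_all_iff]
    intro k
    have h2 : μ {w | ∀ i < k + 1, w i ∈ W i} = 1 := by
      rw [hcyl _ _ fun i => Finset.Subset.refl _]; simp [hsum]
    have h3 : ∀ᵐ w ∂μ, w ∈ {w : ℕ → List ℕ | ∀ i < k + 1, w i ∈ W i} := by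
      have hm : MeasurableSet {w : ℕ → List ℕ | ∀ i < k + 1, w i ∈ W i} := by
        have e : {w : ℕ → List ℕ | ∀ i < k + 1, w i ∈ W i} =
          Set.pi (Finset.range (k+1)) (fun i => (W i : Set (List ℕ))) := by
          ext w; simp [Set.mem_pi]
        rw [e]
        exact MeasurableSet.pi (Finset.countable_toSet _) fun i _ => trivial
      exact (mem_ae_iff_prob_eq_one hm).2 h2
    filter_upwards [h3] with w hw using hw k (by omega)
  have hm : AEMeasurable pt μ := by
    refine aemeasurable_of_tendsto_metrizable_ae' (f := fun k w => phi (pre w k) 0) (fun k => ?_) ?_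
    · have : Measurable fun l : List ℕ => phi l 0 := Measurable.of_discrete
      exact (this.comp (pre_meas k)).aemeasurable
    · filter_upwards [hae] with w hw using pt_tendsto fun k => hW k _ (hw k)
  have main : ∀ U : Set ℝ, IsClosed U → Metric.ediam U ≤ 1 →
      μ (pt ⁻¹' U) ≤ ENNReal.ofReal C * Metric.ediam U ^ s := by
    intro U hU hUd
    set E : Set (ℕ → List ℕ) := {w | (∀ k, w k ∈ W k) ∧ pt w ∈ U} with hE
    have hle : μ (pt ⁻¹' U) ≤ μ E := by
      refine measure_mono_ae ?_
      filter_upwards [hae] with w hw h using ⟨hw, h⟩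
    refine hle.trans ?_
    rcases E.eq_empty_or_nonempty with he | ⟨w0, hw0⟩
    · rw [he]; simp
    by_cases hall : ∀ w ∈ E, w = w0
    · have : μ E ≤ 0 := by
        have ht : Tendsto (fun k => ENNReal.ofReal (∏ i ∈ Finset.range k, p i (w0 i))) atTop
            (𝓝 0) := by
          have := ENNReal.tendsto_ofReal (h0 w0 hw0.1)
          rwa [ENNReal.ofReal_zero] at this
        refine ge_of_tendsto' ht fun k => ?_
        have h2 := hcyl k (fun i => {w0 i}) (fun i => by simpa using hw0.1 i)
        simp only [Finset.sum_singleton] at h2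
        rw [← h2]
        refine measure_mono fun w hw => ?_
        rw [hall w hw]; simp
      exact this.trans zero_le
    · push Not at hall
      obtain ⟨w1, hw1, hne⟩ := hall
      have hex : ∃ k, ∃ w ∈ E, w k ≠ w0 k := by
        by_contra hc
        push Not at hc
        exact hne (funext fun k => hc k w1 hw1)
      set k := Nat.find hex with hk
      have hag : ∀ w ∈ E, ∀ i < k, w i = w0 i := by
        intro w hw i hi
        have := Nat.find_min hex hi
        push Not at this
        exact this w hw
      obtain ⟨w2, hw2, hne2⟩ := Nat.find_spec hex
      set A : Finset (List ℕ) := (W k).filter fun l => ∃ w ∈ E, w k = l with hA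
      have hAW : A ⊆ W k := Finset.filter_subset _ _
      have hAn : A.Nontrivial := by
        refine ⟨w2 k, ?_, w0 k, ?_, hne2⟩
        · exact Finset.mem_coe.2 (Finset.mem_filter.2 ⟨hw2.1 k, w2, hw2, rfl⟩)
        · exact Finset.mem_coe.2 (Finset.mem_filter.2 ⟨hw0.1 k, w0, hw0, rfl⟩)
      have hfin : Metric.ediam U ≠ ∞ := ne_top_of_le_ne_top ENNReal.one_ne_top hUd
      set d := (Metric.ediam U).toReal with hd
      have key := h1 w0 hw0.1 k A hAW hAn d ENNReal.toReal_nonneg (by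
        intro l hl l' hl'
        obtain ⟨-, w, hw, rfl⟩ := Finset.mem_filter.1 hl
        obtain ⟨-, w', hw', rfl⟩ := Finset.mem_filter.1 hl'
        have aux : ∀ w ∈ E, pt (sh (k+1) w) ∈ Icc (1/2:ℝ) (2/3) ∧
            pt w = phi (pre w0 k) (phi (w k) (pt (sh (k+1) w))) := by
          intro w hw
          have hb : ∀ j, Blk (w j) := fun j => hW j _ (hw.1 j)
          refine ⟨pt_mem fun j => hb _, ?_⟩
          rw [← phi_append, ← pre_congr (hag w hw)]
          exact pt_sh hb (k+1)
        refine ⟨_, (aux w hw).1, _, (aux w' hw').1, ?_⟩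
        rw [← (aux w hw).2, ← (aux w' hw').2, ← Real.dist_eq, dist_edist]
        exact ENNReal.toReal_mono hfin (Metric.edist_le_ediam_of_mem hw.2 hw'.2))
      calc μ E ≤ μ {w | ∀ i < k + 1, w i ∈ (if i < k then {w0 i} else if i = k then A else ∅ :
              Finset (List ℕ))} := by
            refine measure_mono fun w hw i hi => ?_
            rcases Nat.lt_succ_iff_lt_or_eq.1 hi with hi' | hi'
            · simp [hi', hag w hw i hi']
            · subst hi'
              simp only [lt_irrefl, if_false, if_true]
              exact Finset.mem_filter.2 ⟨hw.1 _, w, hw, rfl⟩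
        _ = ENNReal.ofReal ((∏ i ∈ Finset.range k, p i (w0 i)) * ∑ l ∈ A, p k l) := by
            rw [hcyl]
            · congr 1
              rw [Finset.prod_range_succ]
              congr 1
              · refine Finset.prod_congr rfl fun i hi => ?_
                rw [if_pos (Finset.mem_range.1 hi), Finset.sum_singleton]
              · simp
            · intro i
              split_ifs with h2 h3
              · simpa using hw0.1 i
              · rw [h3]; exact hAW
              · simp
        _ ≤ ENNReal.ofReal (C * d ^ s) := ENNReal.ofReal_le_ofReal key
        _ = ENNReal.ofReal C * Metric.ediam U ^ s := by
            rw [ENNReal.ofReal_mul hC.le, ← ENNReal.ofReal_rpow_of_nonneg ENNReal.toReal_nonneg hs.le,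
              ENNReal.ofReal_toReal hfin]
  have hC0 : ENNReal.ofReal C ≠ 0 := by simpa using hC
  have hCt : ENNReal.ofReal C ≠ ∞ := ENNReal.ofReal_ne_top
  have hle : (ENNReal.ofReal C)⁻¹ • μ.map pt ≤ μH[s] := by
    refine Measure.le_hausdorffMeasure s _ 1 one_pos fun U hU => ?_
    rw [Measure.smul_apply, smul_eq_mul]
    calc _ ≤ (ENNReal.ofReal C)⁻¹ * μ.map pt (closure U) := by
          gcongr; exact subset_closure
      _ = (ENNReal.ofReal C)⁻¹ * μ (pt ⁻¹' closure U) := by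
          rw [Measure.map_apply_of_aemeasurable hm isClosed_closure.measurableSet]
      _ ≤ (ENNReal.ofReal C)⁻¹ * (ENNReal.ofReal C * Metric.ediam U ^ s) := by
          gcongr
          rw [← Metric.ediam_closure U]
          exact main _ isClosed_closure (by rwa [Metric.ediam_closure])
      _ = _ := by rw [← mul_assoc, ENNReal.inv_mul_cancel hC0 hCt, one_mul]
  have hne : μH[s] D ≠ 0 := by
    have h2 : μ (pt ⁻¹' D) = 1 := by
      have : pt ⁻¹' D ∈ ae μ := by filter_upwards [hae] with w hw using hD w hw
      have h6 := measure_mono_ae (μ := μ) (s := univ) (t := pt ⁻¹' D)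
        (by filter_upwards [this] with w hw _ using hw)
      exact le_antisymm prob_le_one (by simpa using h6)
    have h3 := hle D
    rw [Measure.smul_apply, smul_eq_mul] at h3
    have h4 := Measure.le_map_apply hm D
    rw [h2] at h4
    intro h5
    rw [h5, nonpos_iff_eq_zero, mul_eq_zero] at h3
    rcases h3 with h3 | h3
    · exact hCt (ENNReal.inv_eq_zero.1 h3)
    · rw [h3] at h4; simp at h4
  obtain ⟨r, hr⟩ : ∃ r : ℝ≥0, s = (r : ℝ) := ⟨⟨s, hs.le⟩, rfl⟩
  rw [hr] at hne ⊢
  rw [ENNReal.ofReal_coe_nnreal]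
  exact le_dimH_of_hausdorffMeasure_ne_zero hne

end BHKW


namespace BHKW
open scoped ENNReal NNReal Topology

lemma frac_le {x y s : ℝ} (hx : 0 ≤ x) (hs : 0 < s) (hs1 : s < 1) (h1 : y ≤ x) (h2 : y ≤ 1) :
    y ≤ x ^ s := by
  rcases le_total x 1 with h | h
  · rcases hx.eq_or_lt with h0 | h0
    · rw [← h0, Real.zero_rpow hs.ne']; linarith
    · have := Real.rpow_le_rpow_of_exponent_ge h0 h hs1.le
      rw [Real.rpow_one] at this; linarith
  · exact h2.trans (Real.one_le_rpow h hs.le)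

lemma count_le (S : Finset ℕ) (a0 : ℕ) (R : ℝ) (hR : 1 ≤ R) (h : ∀ a ∈ S, |(a:ℝ) - a0| ≤ R) :
    (S.card : ℝ) ≤ 3 * R := by
  have hsub : S ⊆ Finset.Icc (a0 - ⌊R⌋₊) (a0 + ⌊R⌋₊) := by
    intro a ha
    have h1 := abs_le.1 (h a ha)
    rw [Finset.mem_Icc]
    constructor
    · rw [Nat.sub_le_iff_le_add]
      rcases le_total a0 a with h3 | h3
      · omega
      · have : a0 - a ≤ ⌊R⌋₊ := Nat.le_floor (by rw [Nat.cast_sub h3]; linarith)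
        omega
    · rcases le_total a0 a with h3 | h3
      · have : a - a0 ≤ ⌊R⌋₊ := Nat.le_floor (by rw [Nat.cast_sub h3]; linarith)
        omega
      · omega
  have h2 := Finset.card_le_card hsub
  rw [Nat.card_Icc] at h2
  have h3 : S.card ≤ 2 * ⌊R⌋₊ + 1 := by omega
  have h4 : (S.card : ℝ) ≤ 2 * (⌊R⌋₊ : ℝ) + 1 := by exact_mod_cast h3
  have h5 := Nat.floor_le (by linarith : 0 ≤ R)
  linarith

lemma sep {a a' α : ℕ} {t t' : ℝ} (hα : 1 ≤ a) (hα' : 1 ≤ a') (ha : a < 2 * α) (ha' : a' < 2 * α)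
    (ht : t ∈ Icc (0:ℝ) 1) (ht' : t' ∈ Icc (0:ℝ) 1) (htt : |t - t'| ≤ 1/2) :
    |(a:ℝ) - a'| ≤ 8 * (α:ℝ) ^ 2 * |1 / (a + t) - 1 / (a' + t')| := by
  rcases eq_or_ne a a' with rfl | hne
  · simp; positivity
  have h1 : (1:ℝ) ≤ |(a:ℝ) - a'| := by
    have : (1:ℤ) ≤ |(a:ℤ) - a'| := Int.one_le_abs (by omega)
    exact_mod_cast this
  have hA : (a:ℝ) + t ≤ 2 * α := by
    have : (a:ℝ) + 1 ≤ 2 * α := by exact_mod_cast ha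
    linarith [ht.2]
  have hA' : (a':ℝ) + t' ≤ 2 * α := by
    have : (a':ℝ) + 1 ≤ 2 * α := by exact_mod_cast ha'
    linarith [ht'.2]
  have p1 : (1:ℝ) ≤ a := by exact_mod_cast hα
  have p2 : (1:ℝ) ≤ a' := by exact_mod_cast hα'
  have q1 : 0 < (a:ℝ) + t := by linarith [ht.1]
  have q2 : 0 < (a':ℝ) + t' := by linarith [ht'.1]
  have e : 1 / ((a:ℝ) + t) - 1 / (a' + t') = (((a':ℝ) - a) + (t' - t)) / ((a + t) * (a' + t')) := by
    rw [div_sub_div _ _ q1.ne' q2.ne']; congr 1; ring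
  rw [e, abs_div, abs_of_pos (mul_pos q1 q2)]
  have h3 : |(a:ℝ) - a'| / 2 ≤ |((a':ℝ) - a) + (t' - t)| := by
    have := abs_sub_abs_le_abs_sub ((a':ℝ) - a) (-(t' - t))
    rw [abs_neg, abs_sub_comm t' t, abs_sub_comm (a':ℝ) a, sub_neg_eq_add] at this
    linarith
  have h4 : ((a:ℝ) + t) * (a' + t') ≤ 4 * (α:ℝ) ^ 2 := by
    calc _ ≤ (2 * (α:ℝ)) * (2 * α) := mul_le_mul hA hA' q2.le (by positivity)
      _ = _ := by ring
  rw [mul_div_assoc', le_div_iff₀ (mul_pos q1 q2)]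
  calc |(a:ℝ) - a'| * (((a:ℝ) + t) * (a' + t')) ≤ |(a:ℝ) - a'| * (4 * (α:ℝ) ^ 2) := by gcongr
    _ = 8 * (α:ℝ) ^ 2 * (|(a:ℝ) - a'| / 2) := by ring
    _ ≤ _ := by gcongr

/-- Marker blocks. -/
def mkw (N a b : ℕ) : List ℕ := List.replicate N 1 ++ [a, b]

def MW (N α β : ℕ) : Finset (List ℕ) :=
  (Finset.Ico α (2 * α) ×ˢ Finset.Ico β (2 * β)).image fun p => mkw N p.1 p.2

lemma mkw_inj {N a b a' b' : ℕ} (h : mkw N a b = mkw N a' b') : a = a' ∧ b = b' := by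
  simpa [mkw] using h

lemma MW_card (N α β : ℕ) : (MW N α β).card = α * β := by
  rw [MW, Finset.card_image_of_injective]
  · simp [two_mul]
  · rintro ⟨a, b⟩ ⟨a', b'⟩ h
    obtain ⟨h1, h2⟩ := mkw_inj h
    exact Prod.ext h1 h2

lemma mem_MW {N α β : ℕ} {l : List ℕ} (h : l ∈ MW N α β) : ∃ a b, α ≤ a ∧ a < 2 * α ∧ β ≤ b ∧
    b < 2 * β ∧ l = mkw N a b := by
  simp only [MW, Finset.mem_image, Finset.mem_product, Finset.mem_Ico] at h
  obtain ⟨⟨a, b⟩, ⟨⟨h1, h2⟩, h3, h4⟩, rfl⟩ := h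
  exact ⟨a, b, h1, h2, h3, h4, rfl⟩

lemma pos_rep (N : ℕ) : Pos (List.replicate N 1) := by
  intro a ha; rw [List.eq_of_mem_replicate ha]

lemma pos_two {a b : ℕ} (ha : 1 ≤ a) (hb : 1 ≤ b) : Pos [a, b] := by
  intro c hc; simp at hc; rcases hc with rfl | rfl <;> assumption

lemma phi_mkw (g : List ℕ) (N a b : ℕ) (z : ℝ) : phi g (phi (mkw N a b) z) =
    phi (g ++ List.replicate N 1) (1 / (a + 1 / (b + z))) := by
  simp [mkw, phi_append, phi]

lemma inv_bz {b : ℕ} (hb : 2 ≤ b) {z : ℝ} (hz : z ∈ Icc (1/2:ℝ) (2/3)) :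
    1 / ((b:ℝ) + z) ∈ Icc (0:ℝ) (2/5) := by
  have : (2:ℝ) ≤ b := by exact_mod_cast hb
  have h : 0 < (b:ℝ) + z := by linarith [hz.1]
  refine ⟨by positivity, ?_⟩
  rw [div_le_div_iff₀ h (by norm_num)]; linarith [hz.1]

lemma sep_a {g : List ℕ} (hg : Pos g) {N α β a b a' b' : ℕ} (hα : 1 ≤ α) (hβ : 2 ≤ β)
    (ha : α ≤ a ∧ a < 2 * α) (ha' : α ≤ a' ∧ a' < 2 * α) (hb : β ≤ b) (hb' : β ≤ b')
    {z z' d : ℝ} (hz : z ∈ Icc (1/2:ℝ) (2/3)) (hz' : z' ∈ Icc (1/2:ℝ) (2/3))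
    (hd : |phi g (phi (mkw N a b) z) - phi g (phi (mkw N a' b') z')| ≤ d) :
    |(a:ℝ) - a'| ≤ 128 * (Q (List.replicate N 1) : ℝ) ^ 2 * (Q g : ℝ) ^ 2 * (α:ℝ) ^ 2 * d := by
  have hd0 : 0 ≤ d := (abs_nonneg _).trans hd
  set H : ℝ := (Q (List.replicate N 1) : ℝ) with hH
  have i1 := inv_bz (hβ.trans hb) hz
  have i2 := inv_bz (hβ.trans hb') hz'
  set t := 1 / ((b:ℝ) + z)
  set t' := 1 / ((b':ℝ) + z')
  rw [phi_mkw, phi_mkw] at hd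
  have hp : Pos (g ++ List.replicate N 1) := pos_append.2 ⟨hg, pos_rep N⟩
  have unit : ∀ (a : ℕ) (t : ℝ), 1 ≤ a → 0 ≤ t → 1 / ((a:ℝ) + t) ∈ Icc (0:ℝ) 1 := by
    intro a t h1 h2
    have h3 : (1:ℝ) ≤ a := by exact_mod_cast h1
    refine ⟨by positivity, ?_⟩
    rw [div_le_one (by linarith)]; linarith
  have h1 := le_phi_dist hp (unit a t (by omega) i1.1) (unit a' t' (by omega) i2.1)
  have h2 : (Q (g ++ List.replicate N 1) : ℝ) ≤ 2 * (Q g * H) := by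
    rw [hH]; exact_mod_cast Q_append_le hg (pos_rep N)
  have h3 := sep (α := α) (hα.trans ha.1) (hα.trans ha'.1) ha.2 ha'.2 ⟨i1.1, by linarith [i1.2]⟩
    ⟨i2.1, by linarith [i2.2]⟩ (abs_le.2 ⟨by linarith [i1.1, i2.2], by linarith [i1.2, i2.1]⟩)
  calc _ ≤ 8 * (α:ℝ) ^ 2 * |1 / ((a:ℝ) + t) - 1 / (a' + t')| := h3
    _ ≤ 8 * (α:ℝ) ^ 2 * (d * (4 * (2 * (Q g * H)) ^ 2)) := by
        gcongr
        refine h1.trans ?_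
        gcongr
    _ = _ := by ring

lemma sep_b {g : List ℕ} (hg : Pos g) {N α β a b b' : ℕ} (hα : 1 ≤ α) (hβ : 2 ≤ β)
    (ha : α ≤ a ∧ a < 2 * α) (hb : β ≤ b ∧ b < 2 * β) (hb' : β ≤ b' ∧ b' < 2 * β)
    {z z' d : ℝ} (hz : z ∈ Icc (1/2:ℝ) (2/3)) (hz' : z' ∈ Icc (1/2:ℝ) (2/3))
    (hd : |phi g (phi (mkw N a b) z) - phi g (phi (mkw N a b') z')| ≤ d) :
    |(b:ℝ) - b'| ≤ 2048 * (Q (List.replicate N 1) : ℝ) ^ 2 * (Q g : ℝ) ^ 2 * (α:ℝ) ^ 2 *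
      (β:ℝ) ^ 2 * d := by
  have hd0 : 0 ≤ d := (abs_nonneg _).trans hd
  set H : ℝ := (Q (List.replicate N 1) : ℝ) with hH
  have i1 := inv_bz (hβ.trans hb.1) hz
  have i2 := inv_bz (hβ.trans hb'.1) hz'
  rw [phi_mkw, phi_mkw] at hd
  have e : ∀ y : ℝ, phi (g ++ List.replicate N 1) (1 / (a + y))
      = phi ((g ++ List.replicate N 1) ++ [a]) y := by
    intro y; simp [phi_append, phi]
  rw [e, e] at hd
  have ha1 : Pos [a] := by intro c hc; simp at hc; omega
  have hp0 : Pos (g ++ List.replicate N 1) := pos_append.2 ⟨hg, pos_rep N⟩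
  have hp : Pos ((g ++ List.replicate N 1) ++ [a]) := pos_append.2 ⟨hp0, ha1⟩
  have h1 := le_phi_dist hp ⟨i1.1, by linarith [i1.2]⟩ ⟨i2.1, by linarith [i2.2]⟩
  have h2 : (Q (g ++ List.replicate N 1) : ℝ) ≤ 2 * (Q g * H) := by
    rw [hH]; exact_mod_cast Q_append_le hg (pos_rep N)
  have h2' : (Q ((g ++ List.replicate N 1) ++ [a]) : ℝ) ≤
      2 * (Q (g ++ List.replicate N 1) * a) := by
    have := Q_append_le hp0 ha1
    simp only [show Q [a] = a by simp] at this
    exact_mod_cast this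
  have haα : (a:ℝ) ≤ 2 * α := by exact_mod_cast ha.2.le
  have h2'' : (Q ((g ++ List.replicate N 1) ++ [a]) : ℝ) ≤ 8 * (Q g * H * α) := by
    calc _ ≤ 2 * ((2 * (Q g * H)) * (2 * (α:ℝ))) := h2'.trans (by gcongr)
      _ = _ := by ring
  have h3 := sep (α := β) (by omega) (by omega) hb.2 hb'.2 (t := z) (t' := z')
    ⟨by linarith [hz.1], by linarith [hz.2]⟩ ⟨by linarith [hz'.1], by linarith [hz'.2]⟩
    (abs_le.2 ⟨by linarith [hz.1, hz'.2], by linarith [hz.2, hz'.1]⟩)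
  calc _ ≤ 8 * (β:ℝ) ^ 2 * |1 / ((b:ℝ) + z) - 1 / (b' + z')| := h3
    _ ≤ 8 * (β:ℝ) ^ 2 * (d * (4 * (8 * (Q g * H * α)) ^ 2)) := by
        gcongr
        refine h1.trans ?_
        gcongr
    _ = _ := by ring

lemma marker_frac {g : List ℕ} (hg : Pos g) {N α β : ℕ} (hα : 1 ≤ α) (hβ : 2 ≤ β) {s : ℝ}
    (hs : 0 < s) (hs1 : s < 1) {A : Finset (List ℕ)} (hA : A ⊆ MW N α β) (hAn : A.Nontrivial)
    {d : ℝ} (hd : 0 ≤ d)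
    (hdist : ∀ l ∈ A, ∀ l' ∈ A, ∃ z ∈ Icc (1/2:ℝ) (2/3), ∃ z' ∈ Icc (1/2:ℝ) (2/3),
        |phi g (phi l z) - phi g (phi l' z')| ≤ d) :
    (A.card : ℝ) / (α * β) ≤
      (384 * (Q (List.replicate N 1) : ℝ) ^ 2 * (Q g : ℝ) ^ 2 * α * d) ^ s ∨
    (A.card : ℝ) / (α * β) ≤
      1 / α * (6144 * (Q (List.replicate N 1) : ℝ) ^ 2 * (Q g : ℝ) ^ 2 * (α:ℝ) ^ 2 * β * d) ^ s := by
  classical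
  set H : ℝ := (Q (List.replicate N 1) : ℝ) with hH
  have hα0 : (0:ℝ) < α := by exact_mod_cast hα
  have hβ0 : (0:ℝ) < β := by have : 0 < β := by omega
                             exact_mod_cast this
  obtain ⟨l0, hl0, l1, hl1, hne⟩ := hAn
  rw [Finset.mem_coe] at hl0 hl1
  obtain ⟨a0, b0, ha0, ha0', hb0, hb0', rfl⟩ := mem_MW (hA hl0)
  by_cases hall : ∀ a b, mkw N a b ∈ A → a = a0
  · right
    set R := 2048 * H ^ 2 * (Q g : ℝ) ^ 2 * (α:ℝ) ^ 2 * (β:ℝ) ^ 2 * d with hR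
    have hbd : ∀ b, mkw N a0 b ∈ A → |(b:ℝ) - b0| ≤ R := by
      intro b hb
      obtain ⟨z, hz, z', hz', h⟩ := hdist _ hb _ hl0
      obtain ⟨a', b', h1, h2, h3, h4, e⟩ := mem_MW (hA hb)
      obtain ⟨rfl, rfl⟩ := mkw_inj e
      exact sep_b hg hα hβ ⟨ha0, ha0'⟩ ⟨h3, h4⟩ ⟨hb0, hb0'⟩ hz hz' h
    obtain ⟨a1, b1, h1, h2, h3, h4, rfl⟩ := mem_MW (hA hl1)
    obtain rfl := hall a1 b1 hl1
    have hR1 : 1 ≤ R := by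
      refine le_trans ?_ (hbd b1 hl1)
      have : b1 ≠ b0 := by rintro rfl; exact hne rfl
      have : (1:ℤ) ≤ |(b1:ℤ) - b0| := Int.one_le_abs (by omega)
      exact_mod_cast this
    set S := (Finset.Ico β (2 * β)).filter fun b => mkw N a1 b ∈ A with hS
    have hsub : A ⊆ S.image fun b => mkw N a1 b := by
      intro l hl
      obtain ⟨a', b', h1, h2, h3, h4, rfl⟩ := mem_MW (hA hl)
      obtain rfl := hall a' b' hl
      exact Finset.mem_image.2 ⟨b', Finset.mem_filter.2 ⟨Finset.mem_Ico.2 ⟨h3, h4⟩, hl⟩, rfl⟩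
    have hc1 : A.card ≤ S.card := (Finset.card_le_card hsub).trans Finset.card_image_le
    have hc2 : (S.card : ℝ) ≤ 3 * R :=
      count_le S b0 R hR1 fun b hb => hbd b (Finset.mem_filter.1 hb).2
    have hc3 : (S.card : ℝ) ≤ β := by
      have := Finset.card_le_card (show S ⊆ Finset.Ico β (2 * β) from Finset.filter_subset _ _)
      rw [Nat.card_Ico] at this
      have h5 : S.card ≤ β := by omega
      exact_mod_cast h5
    have hc1' : (A.card : ℝ) ≤ S.card := by exact_mod_cast hc1
    have e : (A.card : ℝ) / (α * β) = 1 / α * (A.card / β) := by field_simp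
    rw [e]
    refine mul_le_mul_of_nonneg_left ?_ (by positivity)
    refine frac_le (by positivity) hs hs1 ?_ ?_
    · rw [div_le_iff₀ hβ0]
      calc _ ≤ 3 * R := hc1'.trans hc2
        _ = _ := by rw [hR]; ring
    · rw [div_le_one hβ0]; linarith
  · left
    push Not at hall
    obtain ⟨a1, b1, hab, hane⟩ := hall
    set R := 128 * H ^ 2 * (Q g : ℝ) ^ 2 * (α:ℝ) ^ 2 * d with hR
    have hbd : ∀ a b, mkw N a b ∈ A → |(a:ℝ) - a0| ≤ R := by
      intro a b hb
      obtain ⟨z, hz, z', hz', h⟩ := hdist _ hb _ hl0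
      obtain ⟨a', b', h1, h2, h3, h4, e⟩ := mem_MW (hA hb)
      obtain ⟨rfl, rfl⟩ := mkw_inj e
      exact sep_a hg hα hβ ⟨h1, h2⟩ ⟨ha0, ha0'⟩ h3 hb0 hz hz' h
    have hR1 : 1 ≤ R := by
      refine le_trans ?_ (hbd a1 b1 hab)
      have : (1:ℤ) ≤ |(a1:ℤ) - a0| := Int.one_le_abs (by omega)
      exact_mod_cast this
    set S := (Finset.Ico α (2 * α)).filter fun a => ∃ b, mkw N a b ∈ A with hS
    have hsub : A ⊆ (S ×ˢ Finset.Ico β (2 * β)).image fun p => mkw N p.1 p.2 := by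
      intro l hl
      obtain ⟨a', b', h1, h2, h3, h4, rfl⟩ := mem_MW (hA hl)
      exact Finset.mem_image.2 ⟨(a', b'), Finset.mem_product.2
        ⟨Finset.mem_filter.2 ⟨Finset.mem_Ico.2 ⟨h1, h2⟩, b', hl⟩, Finset.mem_Ico.2 ⟨h3, h4⟩⟩, rfl⟩
    have hc1 : A.card ≤ S.card * β := by
      refine (Finset.card_le_card hsub).trans (Finset.card_image_le.trans ?_)
      rw [Finset.card_product, Nat.card_Ico]
      apply Nat.mul_le_mul_left; omega
    have hc2 : (S.card : ℝ) ≤ 3 * R :=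
      count_le S a0 R hR1 fun a ha => by
        obtain ⟨-, b, hb⟩ := Finset.mem_filter.1 ha
        exact hbd a b hb
    have hc3 : (S.card : ℝ) ≤ α := by
      have := Finset.card_le_card (show S ⊆ Finset.Ico α (2 * α) from Finset.filter_subset _ _)
      rw [Nat.card_Ico] at this
      have h5 : S.card ≤ α := by omega
      exact_mod_cast h5
    have hc1' : (A.card : ℝ) ≤ S.card * β := by exact_mod_cast hc1
    refine frac_le (by positivity) hs hs1 ?_ ?_
    · rw [div_le_iff₀ (by positivity)]
      calc _ ≤ 3 * R * β := hc1'.trans (by gcongr)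
        _ = _ := by rw [hR]; ring
    · rw [div_le_one (by positivity)]
      exact hc1'.trans (by gcongr)

end BHKW


namespace BHKW
open scoped ENNReal NNReal Topology

lemma ceil_bounds {A : ℝ} (h : 1 ≤ A) : A ≤ (⌈A⌉₊ : ℝ) ∧ (⌈A⌉₊ : ℝ) ≤ 2 * A :=
  ⟨Nat.le_ceil A, by have := Nat.ceil_lt_add_one (by linarith : 0 ≤ A); linarith⟩

lemma rpow_double {A α e : ℝ} (hA : 0 < A) (h1 : A ≤ α) (h2 : α ≤ 2 * A) (he : -1 ≤ e)
    (he1 : e ≤ 1) : α ^ e ≤ 2 * A ^ e := by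
  have hp : 0 < A ^ e := Real.rpow_pos_of_pos hA e
  rcases le_total 0 e with h | h
  · calc α ^ e ≤ (2 * A) ^ e := Real.rpow_le_rpow (by linarith) h2 h
      _ = 2 ^ e * A ^ e := Real.mul_rpow (by norm_num) hA.le
      _ ≤ 2 * A ^ e := by
        gcongr
        calc (2:ℝ) ^ e ≤ 2 ^ (1:ℝ) := Real.rpow_le_rpow_of_exponent_le (by norm_num) he1
          _ = 2 := Real.rpow_one 2
  · have := Real.rpow_le_rpow_of_nonpos hA h1 h
    linarith

lemma sep_pair {l l' : List ℕ} (h : Pos l) (h' : Pos l') (hlen : l.length = l'.length)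
    (hne : l ≠ l') : ∃ c > 0, ∀ z ∈ Icc (1/2:ℝ) (2/3), ∀ z' ∈ Icc (1/2:ℝ) (2/3),
      c ≤ |phi l z - phi l' z'| := by
  have hsub : Icc (1/2:ℝ) (2/3) ⊆ Icc 0 1 := fun z hz => Ioo_subset_Icc_self (Icc_sub hz)
  have hc : ContinuousOn (fun p : ℝ × ℝ => |phi l p.1 - phi l' p.2|)
      (Icc (1/2:ℝ) (2/3) ×ˢ Icc (1/2:ℝ) (2/3)) := by
    apply ContinuousOn.abs
    apply ContinuousOn.sub
    · exact (phi_continuousOn h).comp continuousOn_fst fun p hp => hsub hp.1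
    · exact (phi_continuousOn h').comp continuousOn_snd fun p hp => hsub hp.2
  have hK : IsCompact (Icc (1/2:ℝ) (2/3) ×ˢ Icc (1/2:ℝ) (2/3)) := isCompact_Icc.prod isCompact_Icc
  obtain ⟨p, hp, hmin⟩ := hK.exists_isMinOn
    ⟨((1/2:ℝ), (1/2:ℝ)), ⟨by norm_num, by norm_num⟩⟩ hc
  refine ⟨_, ?_, fun z hz z' hz' => hmin (show (z, z') ∈ _ from ⟨hz, hz'⟩)⟩
  rw [gt_iff_lt, abs_pos, sub_ne_zero]
  intro e
  exact hne (phi_inj h h' hlen (Icc_sub hp.1) (Icc_sub hp.2) e)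

lemma sep_finset (F : Finset (List ℕ)) (n : ℕ) (hF : ∀ l ∈ F, Pos l ∧ l.length = n) :
    ∃ c > 0, ∀ l ∈ F, ∀ l' ∈ F, l ≠ l' → ∀ z ∈ Icc (1/2:ℝ) (2/3), ∀ z' ∈ Icc (1/2:ℝ) (2/3),
      c ≤ |phi l z - phi l' z'| := by
  have h : ∀ᶠ c in 𝓝[>] (0:ℝ), ∀ p ∈ F ×ˢ F, p.1 ≠ p.2 → ∀ z ∈ Icc (1/2:ℝ) (2/3),
      ∀ z' ∈ Icc (1/2:ℝ) (2/3), c ≤ |phi p.1 z - phi p.2 z'| := by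
    rw [Filter.eventually_all_finset]
    rintro ⟨l, l'⟩ hp
    obtain ⟨h1, h2⟩ := Finset.mem_product.1 hp
    by_cases hne : l = l'
    · exact Eventually.of_forall fun c h => absurd hne h
    obtain ⟨c, hc, hcc⟩ := sep_pair (hF l h1).1 (hF l' h2).1
      ((hF l h1).2.trans (hF l' h2).2.symm) hne
    filter_upwards [Ioc_mem_nhdsGT hc] with c' hc' _ z hz z' hz'
    exact hc'.2.trans (hcc z hz z' hz')
  obtain ⟨c, h1, h2⟩ := (h.and self_mem_nhdsWithin).exists
  exact ⟨c, h2, fun l hl l' hl' => h1 (l, l') (Finset.mem_product.2 ⟨hl, hl'⟩)⟩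

lemma neg_two_rpow {q s : ℝ} (hq : 0 < q) : q ^ (-(2 * s)) = 1 / (q ^ 2) ^ s := by
  rw [Real.rpow_neg hq.le, one_div, ← Real.rpow_natCast, ← Real.rpow_mul hq.le]
  norm_num

lemma marker_bound {s m C q H α β d E x : ℝ} (hs : 0 < s) (hq : 0 < q) (hH : 0 < H)
    (hα : 0 < α) (hβ : 0 < β) (hd : 0 ≤ d) (hE : 0 < E) (hC : 0 < C) (hx : 0 ≤ x)
    (hm : m ≤ C * q ^ (-(2 * s))) (hCE : C ≤ 1 / E) (h1 : α ^ s ≤ 2 * E)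
    (h2 : α ^ (2 * s - 1) * β ^ s ≤ 4 * E)
    (hfr : x ≤ (384 * H ^ 2 * q ^ 2 * α * d) ^ s ∨
      x ≤ 1 / α * (6144 * H ^ 2 * q ^ 2 * α ^ 2 * β * d) ^ s) :
    m * x ≤ 4 * (6144 * H ^ 2) ^ s * d ^ s := by
  rw [neg_two_rpow hq] at hm
  have hq2 : 0 < (q ^ 2) ^ s := by positivity
  have hCE' : C * E ≤ 1 := by rwa [le_div_iff₀ hE] at hCE
  rcases hfr with hfr | hfr
  · calc m * x ≤ (C * (1 / (q ^ 2) ^ s)) * (384 * H ^ 2 * q ^ 2 * α * d) ^ s :=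
          mul_le_mul hm hfr hx (by positivity)
      _ = C * α ^ s * (384 * H ^ 2) ^ s * d ^ s := by
          rw [Real.mul_rpow (by positivity) hd, Real.mul_rpow (by positivity) hα.le,
            Real.mul_rpow (by positivity) (by positivity)]
          field_simp
      _ ≤ C * (2 * E) * (6144 * H ^ 2) ^ s * d ^ s := by
          gcongr; norm_num
      _ = (C * E) * (2 * (6144 * H ^ 2) ^ s * d ^ s) := by ring
      _ ≤ 1 * (2 * (6144 * H ^ 2) ^ s * d ^ s) := by gcongr
      _ ≤ _ := by
          have : 0 ≤ (6144 * H ^ 2) ^ s * d ^ s := by positivity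
          linarith
  · have e : 1 / α * (α ^ 2) ^ s = α ^ (2 * s - 1) := by
      rw [Real.rpow_sub hα, Real.rpow_one, ← Real.rpow_natCast, ← Real.rpow_mul hα.le]
      push_cast; ring
    calc m * x ≤ (C * (1 / (q ^ 2) ^ s)) *
          (1 / α * (6144 * H ^ 2 * q ^ 2 * α ^ 2 * β * d) ^ s) :=
          mul_le_mul hm hfr hx (by positivity)
      _ = C * ((1 / α * (α ^ 2) ^ s) * β ^ s) * (6144 * H ^ 2) ^ s * d ^ s := by
          rw [Real.mul_rpow (by positivity) hd, Real.mul_rpow (by positivity) hβ.le,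
            Real.mul_rpow (by positivity) (by positivity),
            Real.mul_rpow (by positivity) (by positivity)]
          field_simp
      _ = C * (α ^ (2 * s - 1) * β ^ s) * (6144 * H ^ 2) ^ s * d ^ s := by rw [e]
      _ ≤ C * (4 * E) * (6144 * H ^ 2) ^ s * d ^ s := by gcongr
      _ = (C * E) * (4 * (6144 * H ^ 2) ^ s * d ^ s) := by ring
      _ ≤ 1 * (4 * (6144 * H ^ 2) ^ s * d ^ s) := by gcongr
      _ = _ := one_mul _

lemma free_bound {s m C q d c : ℝ} (hs : 0 < s) (hq : 0 < q) (hC : 0 < C) (hc : 0 < c)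
    (hm : m ≤ C * q ^ (-(2 * s))) (hd : c ≤ d * (4 * q ^ 2)) :
    m ≤ C * (4 / c) ^ s * d ^ s := by
  rw [neg_two_rpow hq] at hm
  have hd0 : 0 < d := by
    by_contra h
    have : d * (4 * q ^ 2) ≤ 0 := mul_nonpos_of_nonpos_of_nonneg (by linarith) (by positivity)
    linarith
  have : 1 / (q ^ 2) ^ s ≤ (4 / c) ^ s * d ^ s := by
    rw [← Real.mul_rpow (by positivity) hd0.le, ← Real.one_rpow s,
      ← Real.div_rpow (by norm_num) (by positivity)]
    apply Real.rpow_le_rpow (by positivity) _ hs.le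
    rw [div_le_iff₀ (by positivity), div_mul_eq_mul_div, div_mul_eq_mul_div,
      le_div_iff₀ hc]
    linarith
  calc m ≤ C * (1 / (q ^ 2) ^ s) := hm
    _ ≤ C * ((4 / c) ^ s * d ^ s) := by gcongr
    _ = _ := by ring

lemma step_bound {s q q' K C m : ℝ} (hs : 0 < s) (hq : 0 < q) (hq' : 0 < q') (hK : 0 < K)
    (hC : 0 < C) (h : q' ≤ K * q) (hm : m ≤ C * q ^ (-(2 * s))) :
    m ≤ C * K ^ (2 * s) * q' ^ (-(2 * s)) := by
  have : (K * q) ^ (-(2 * s)) ≤ q' ^ (-(2 * s)) :=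
    Real.rpow_le_rpow_of_nonpos hq' h (by linarith)
  rw [Real.mul_rpow hK.le hq.le, Real.rpow_neg hK.le] at this
  have hK2 : 0 < K ^ (2 * s) := by positivity
  calc m ≤ C * q ^ (-(2 * s)) := hm
    _ = C * K ^ (2 * s) * ((K ^ (2 * s))⁻¹ * q ^ (-(2 * s))) := by field_simp
    _ ≤ _ := by gcongr

lemma Q_mkw_le {N a b α β : ℕ} (hα : 1 ≤ α) (hβ : 1 ≤ β) (ha : α ≤ a ∧ a < 2 * α)
    (hb : β ≤ b ∧ b < 2 * β) :
    (Q (mkw N a b) : ℝ) ≤ 16 * (Q (List.replicate N 1) : ℝ) * (α * β) := by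
  have h := Q_append_le (pos_rep N) (pos_two (hα.trans ha.1) (hβ.trans hb.1))
  have h2 : Q [a, b] = a * b + 1 := by simp
  have h3 : a * b + 1 ≤ 8 * (α * β) := by
    have h4 : a * b ≤ (2 * α) * (2 * β) := Nat.mul_le_mul ha.2.le hb.2.le
    have h5 : 1 ≤ α * β := Nat.mul_le_mul hα hβ
    nlinarith
  have : Q (mkw N a b) ≤ 16 * Q (List.replicate N 1) * (α * β) := by
    calc _ ≤ 2 * (Q (List.replicate N 1) * Q [a, b]) := h
      _ ≤ 2 * (Q (List.replicate N 1) * (8 * (α * β))) := by rw [h2]; gcongr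
      _ = _ := by ring
  exact_mod_cast this

lemma blk_mkw {N a b : ℕ} (hN : 2 ≤ N) (ha : 1 ≤ a) (hb : 1 ≤ b) : Blk (mkw N a b) := by
  obtain ⟨M, rfl⟩ : ∃ M, N = M + 2 := ⟨N - 2, by omega⟩
  exact ⟨List.replicate M 1 ++ [a, b], pos_append.2 ⟨pos_rep M, pos_two ha hb⟩, by
    simp [mkw, List.replicate_succ]⟩

end BHKW


namespace BHKW
open scoped ENNReal NNReal Topology

open Classical in
/-- The greedy sequence of constants. -/
noncomputable def Cs (s K : ℝ) (α β : ℕ → ℕ) (E : ℕ → ℝ) (E0 : ℝ) : ℕ → ℝ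
  | 0 => 1
  | k + 1 => if Cs s K α β E E0 k ≤ 1 / E k then
      Cs s K α β E E0 k * (K ^ (2 * s) * ((α k : ℝ) * β k) ^ (2 * s - 1))
    else Cs s K α β E E0 k * (1 / (2 * E0))

theorem lower_core {s E0 : ℝ} {N : ℕ} (hs : 0 < s) (hs1 : s < 1) (hN : 2 ≤ N)
    (α β : ℕ → ℕ) (E : ℕ → ℝ) (hα : ∀ k, 1 ≤ α k) (hβ : ∀ k, 2 ≤ β k) (hE : ∀ k, 0 < E k)
    (hE0 : 1 ≤ E0) (hEs : ∀ k, E (k + 1) = E k * E0)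
    (h1 : ∀ k, (α k : ℝ) ^ s ≤ 2 * E k)
    (h2 : ∀ k, (α k : ℝ) ^ (2 * s - 1) * (β k : ℝ) ^ s ≤ 4 * E k)
    (h3 : ∀ k, ((α k : ℝ) * β k) ^ (2 * s - 1) ≤ 4 * E k)
    (F : Finset (List ℕ)) (hF : ∀ l ∈ F, Blk l ∧ l.length = N + 2)
    (hZ : 2 * 4 ^ s * E0 ≤ ∑ l ∈ F, (Q l : ℝ) ^ (-(2 * s)))
    (D : Set ℝ) (hD : ∀ w : ℕ → List ℕ, (∀ k, Blk (w k) ∧ (w k).length = N + 2) →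
      (∃ᶠ k in atTop, w k ∈ MW N (α k) (β k)) → pt w ∈ D) :
    ENNReal.ofReal s ≤ dimH D := by
  classical
  set H : ℝ := (Q (List.replicate N 1) : ℝ) with hH
  have hH1 : (1:ℝ) ≤ H := by rw [hH]; exact_mod_cast Q_pos (pos_rep N)
  have hH0 : 0 < H := by linarith
  set K := 32 * H with hK
  have hK0 : 0 < K := by positivity
  have hα0 : ∀ k, (0:ℝ) < α k := fun k => by exact_mod_cast hα k
  have hβ0 : ∀ k, (0:ℝ) < β k := fun k => by
    have := hβ k
    have : 0 < β k := by omega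
    exact_mod_cast this
  have hE00 : 0 < E0 := by linarith
  set C : ℕ → ℝ := Cs s K α β E E0 with hC
  have C0 : C 0 = 1 := rfl
  have Cm : ∀ k, C k ≤ 1 / E k →
      C (k+1) = C k * (K ^ (2 * s) * ((α k : ℝ) * β k) ^ (2 * s - 1)) := fun k h => by
    simp only [hC, Cs]; rw [if_pos h]
  have Cf : ∀ k, ¬ C k ≤ 1 / E k → C (k+1) = C k * (1 / (2 * E0)) := fun k h => by
    simp only [hC, Cs]; rw [if_neg h]
  have Cpos : ∀ k, 0 < C k := by
    intro k
    induction k with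
    | zero => rw [C0]; norm_num
    | succ k ih =>
      have a1 := hα0 k
      have a2 := hβ0 k
      by_cases h : C k ≤ 1 / E k
      · rw [Cm k h]; positivity
      · rw [Cf k h]; positivity
  set M := max 1 (4 * K ^ (2 * s)) with hM
  have hM0 : 0 < M := lt_of_lt_of_le one_pos (le_max_left _ _)
  have CM : ∀ k, C k ≤ M := by
    intro k
    induction k with
    | zero => rw [C0]; exact le_max_left _ _
    | succ k ih =>
      have a1 := hE k
      by_cases h : C k ≤ 1 / E k
      · refine le_trans ?_ (le_max_right _ _)
        rw [Cm k h]
        calc _ ≤ 1 / E k * (K ^ (2 * s) * (4 * E k)) := by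
              have := h3 k
              have b1 := hα0 k
              have b2 := hβ0 k
              gcongr
          _ = _ := by field_simp
      · rw [Cf k h]
        have : 1 / (2 * E0) ≤ 1 := by rw [div_le_one (by positivity)]; linarith
        calc _ ≤ C k * 1 := by gcongr; exact (Cpos k).le
          _ ≤ M := by linarith
  have Cinf : ∃ᶠ k in atTop, C k ≤ 1 / E k := by
    rw [frequently_atTop]
    by_contra hcon
    push Not at hcon
    obtain ⟨k0, hk0⟩ := hcon
    have hj : ∀ j, C (k0 + j) * E (k0 + j) * 2 ^ j = C k0 * E k0 := by
      intro j
      induction j with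
      | zero => simp
      | succ j ih =>
        rw [← ih, ← add_assoc, Cf _ (not_le.2 (hk0 (k0 + j) (by omega))), hEs]
        field_simp
        ring
    have hlt : ∀ j, (2:ℝ) ^ j < C k0 * E k0 := by
      intro j
      rw [← hj j]
      have b1 := hk0 (k0 + j) (by omega)
      rw [div_lt_iff₀ (hE _)] at b1
      have : (0:ℝ) < 2 ^ j := by positivity
      nlinarith
    obtain ⟨j, hj2⟩ := pow_unbounded_of_one_lt (C k0 * E k0) (by norm_num : (1:ℝ) < 2)
    exact absurd (hlt j) (not_lt.2 hj2.le)
  set Zf := ∑ l ∈ F, (Q l : ℝ) ^ (-(2 * s)) with hZf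
  have hZ0 : 0 < Zf := lt_of_lt_of_le (by positivity) hZ
  set W : ℕ → Finset (List ℕ) := fun k => if C k ≤ 1 / E k then MW N (α k) (β k) else F with hW
  set p : ℕ → List ℕ → ℝ := fun k l => if C k ≤ 1 / E k then 1 / ((α k : ℝ) * β k)
    else (Q l : ℝ) ^ (-(2 * s)) / Zf with hp
  have hMWb : ∀ k, ∀ l ∈ MW N (α k) (β k), Blk l ∧ l.length = N + 2 := by
    intro k l hl
    obtain ⟨a, b, b1, b2, b3, b4, rfl⟩ := mem_MW hl
    have := hα k
    have := hβ k
    exact ⟨blk_mkw hN (by omega) (by omega), by simp [mkw]⟩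
  have hWb : ∀ k, ∀ l ∈ W k, Blk l ∧ l.length = N + 2 := by
    intro k l hl
    by_cases h : C k ≤ 1 / E k
    · simp only [hW, h, if_true] at hl; exact hMWb k l hl
    · simp only [hW, h, if_false] at hl; exact hF l hl
  have hp0 : ∀ k l, 0 ≤ p k l := by
    intro k l
    have b1 := hα0 k
    have b2 := hβ0 k
    simp only [hp]; split_ifs <;> positivity
  have hsum : ∀ k, ∑ l ∈ W k, p k l = 1 := by
    intro k
    have b1 := hα0 k
    have b2 := hβ0 k
    by_cases h : C k ≤ 1 / E k
    · simp only [hW, hp, h, if_true, Finset.sum_const, MW_card, nsmul_eq_mul]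
      push_cast; field_simp
    · simp only [hW, hp, h, if_false]
      rw [← Finset.sum_div, ← hZf, div_self hZ0.ne']
  have hinv : ∀ w : ℕ → List ℕ, (∀ k, w k ∈ W k) → ∀ k,
      ∏ i ∈ Finset.range k, p i (w i) ≤ C k * (Q (pre w k) : ℝ) ^ (-(2 * s)) := by
    intro w hw k
    have hb : ∀ k, Blk (w k) := fun k => (hWb k _ (hw k)).1
    induction k with
    | zero => simp [pre, C0]
    | succ k ih =>
      have q0 : (0:ℝ) < Q (pre w k) := by exact_mod_cast Q_pos (pre_pos hb k)
      have q1 : (0:ℝ) < Q (pre w (k+1)) := by exact_mod_cast Q_pos (pre_pos hb (k+1))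
      have q2 : (0:ℝ) < Q (w k) := by exact_mod_cast Q_pos (hb k).pos
      have qa : (Q (pre w (k+1)) : ℝ) ≤ 2 * (Q (pre w k) * Q (w k)) := by
        exact_mod_cast Q_append_le (pre_pos hb k) (hb k).pos
      have b1 := hα0 k
      have b2 := hβ0 k
      have hpk := hp0 k (w k)
      rw [Finset.prod_range_succ]
      by_cases h : C k ≤ 1 / E k
      · have hwk := hw k
        simp only [hW, h, if_true] at hwk
        obtain ⟨a, b, c1, c2, c3, c4, e⟩ := mem_MW hwk
        have hβ1 : 1 ≤ β k := by have := hβ k; omega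
        have hq := Q_mkw_le (N := N) (hα k) hβ1 ⟨c1, c2⟩ ⟨c3, c4⟩
        rw [← e] at hq
        have hq2 : (Q (pre w (k+1)) : ℝ) ≤ (K * (α k * β k)) * Q (pre w k) := by
          calc _ ≤ 2 * (Q (pre w k) * (16 * H * ((α k : ℝ) * β k))) := qa.trans (by gcongr)
            _ = _ := by rw [hK]; ring
        have := step_bound hs q0 q1 (by positivity) (Cpos k) hq2 ih
        have e2 : p k (w k) = 1 / ((α k : ℝ) * β k) := by simp only [hp, h, if_true]
        rw [e2, Cm k h]
        calc _ ≤ C k * (K * (α k * β k)) ^ (2 * s) * (Q (pre w (k+1)) : ℝ) ^ (-(2 * s)) *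
              (1 / ((α k : ℝ) * β k)) := by gcongr
          _ = _ := by
            rw [Real.mul_rpow hK0.le (by positivity), Real.rpow_sub (by positivity) (2 * s) 1,
              Real.rpow_one]
            ring
      · have e2 : p k (w k) = (Q (w k) : ℝ) ^ (-(2 * s)) / Zf := by simp only [hp, h, if_false]
        rw [e2, Cf k h]
        have ih' : (∏ i ∈ Finset.range k, p i (w i)) * (Q (w k) : ℝ) ^ (-(2 * s))
            ≤ C k * ((Q (pre w k) : ℝ) * Q (w k)) ^ (-(2 * s)) := by
          rw [Real.mul_rpow q0.le q2.le, ← mul_assoc]; gcongr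
        have := step_bound hs (by positivity) q1 (by norm_num : (0:ℝ) < 2) (Cpos k) qa ih'
        have e4 : (2:ℝ) ^ (2 * s) = 4 ^ s := by
          rw [Real.rpow_mul (by norm_num)]; norm_num
        rw [e4] at this
        calc _ = (∏ i ∈ Finset.range k, p i (w i)) * (Q (w k) : ℝ) ^ (-(2 * s)) / Zf := by ring
          _ ≤ C k * 4 ^ s * (Q (pre w (k+1)) : ℝ) ^ (-(2 * s)) / (2 * 4 ^ s * E0) := by
            have := Cpos k
            gcongr
          _ = _ := by field_simp
  obtain ⟨c, hc, hsep⟩ := sep_finset F (N + 2) fun l hl => ⟨(hF l hl).1.pos, (hF l hl).2⟩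
  set CC := 4 * (6144 * H ^ 2) ^ s + M * (4 / c) ^ s with hCC
  have hCC0 : 0 < CC := by positivity
  have hprod0 : ∀ (w : ℕ → List ℕ) k, 0 ≤ ∏ i ∈ Finset.range k, p i (w i) :=
    fun w k => Finset.prod_nonneg fun i _ => hp0 i _
  refine mass_dist hs hCC0 W p (fun k l hl => (hWb k l hl).1) hp0 hsum ?_ ?_ D ?_
  · intro w hw
    have hb : ∀ k, Blk (w k) := fun k => (hWb k _ (hw k)).1
    have ht : Tendsto (fun k : ℕ => M * ((2:ℝ) ^ (-(2 * s))) ^ k) atTop (𝓝 0) := by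
      have := tendsto_pow_atTop_nhds_zero_of_lt_one (r := (2:ℝ) ^ (-(2 * s))) (by positivity)
        (Real.rpow_lt_one_of_one_lt_of_neg (by norm_num) (by linarith))
      simpa using this.const_mul M
    refine squeeze_zero (hprod0 w) (fun k => ?_) ht
    refine (hinv w hw k).trans ?_
    have hq : (2:ℝ) ^ k ≤ Q (pre w k) := by exact_mod_cast pre_Q hb k
    have e : ((2:ℝ) ^ (-(2 * s))) ^ k = ((2:ℝ) ^ k) ^ (-(2 * s)) := by
      rw [← Real.rpow_natCast, ← Real.rpow_mul (by norm_num), mul_comm, Real.rpow_mul (by norm_num),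
        Real.rpow_natCast]
    rw [e]
    exact mul_le_mul (CM k) (Real.rpow_le_rpow_of_nonpos (by positivity) hq (by linarith))
      (by positivity) hM0.le
  · intro w hw k A hA hAn d hd hdist
    have hb : ∀ k, Blk (w k) := fun k => (hWb k _ (hw k)).1
    have q0 : (0:ℝ) < Q (pre w k) := by exact_mod_cast Q_pos (pre_pos hb k)
    have b1 := hα0 k
    have b2 := hβ0 k
    by_cases h : C k ≤ 1 / E k
    · simp only [hW, h, if_true] at hA
      have e2 : ∑ l ∈ A, p k l = (A.card : ℝ) / ((α k : ℝ) * β k) := by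
        simp only [hp, h, if_true, Finset.sum_const, nsmul_eq_mul]; ring
      rw [e2]
      have hfr := marker_frac (pre_pos hb k) (hα k) (hβ k) hs hs1 hA hAn hd hdist
      refine (marker_bound hs q0 hH0 b1 b2 hd (hE k) (Cpos k) (by positivity) (hinv w hw k) h (h1 k)
        (h2 k) hfr).trans ?_
      rw [hCC]
      have : 0 ≤ M * (4 / c) ^ s := by positivity
      gcongr
      linarith
    · have hA' := hA
      simp only [hW, h, if_false] at hA
      obtain ⟨l, hl, l', hl', hne⟩ := hAn
      rw [Finset.mem_coe] at hl hl'
      obtain ⟨z, hz, z', hz', hd'⟩ := hdist l hl l' hl'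
      have hcl := hsep l (hA hl) l' (hA hl') hne z hz z' hz'
      have hcl2 := le_phi_dist (pre_pos hb k)
        (phi_mem_Icc (hF l (hA hl)).1.pos (Ioo_subset_Icc_self (Icc_sub hz)))
        (phi_mem_Icc (hF l' (hA hl')).1.pos (Ioo_subset_Icc_self (Icc_sub hz')))
      have hcd : c ≤ d * (4 * (Q (pre w k) : ℝ) ^ 2) := by
        refine hcl.trans (hcl2.trans ?_)
        gcongr
      have hle1 : ∑ l ∈ A, p k l ≤ 1 := by
        rw [← hsum k]
        exact Finset.sum_le_sum_of_subset_of_nonneg hA' fun i _ _ => hp0 k i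
      have hfb := free_bound hs q0 (Cpos k) hc (hinv w hw k) hcd
      calc _ ≤ (∏ i ∈ Finset.range k, p i (w i)) * 1 := by
            have := hprod0 w k
            gcongr
        _ ≤ C k * (4 / c) ^ s * d ^ s := by rw [mul_one]; exact hfb
        _ ≤ CC * d ^ s := by
            have h5 : C k * (4 / c) ^ s ≤ CC := by
              rw [hCC]
              have : C k * (4 / c) ^ s ≤ M * (4 / c) ^ s := by
                have := CM k
                gcongr
              have : 0 ≤ 4 * (6144 * H ^ 2) ^ s := by positivity
              linarith
            gcongr
  · intro w hw
    refine hD w (fun k => hWb k _ (hw k)) (Cinf.mono fun k hk => ?_)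
    have := hw k
    simpa only [hW, hk, if_true] using this

end BHKW


namespace BHKW
open scoped ENNReal NNReal Topology

lemma free_exists {t₀ t₁ B s : ℝ} (hB : 1 < B) (hs : 0 < s)
    (h : ¬ Filter.atTop.limsup (fun n : ℕ => (((n : ℝ)⁻¹ : ℝ) : EReal) *
      ENNReal.log (Z t₀ t₁ B s n)) ≤ 0) :
    ∃ N : ℕ, 2 ≤ N ∧ ∃ F : Finset (List ℕ), (∀ l ∈ F, Blk l ∧ l.length = N + 2) ∧
      2 * 4 ^ s * B ^ (((N + 2 : ℕ) : ℝ) * fWeighted t₀ t₁ s) ≤ ∑ l ∈ F, (Q l : ℝ) ^ (-(2 * s)) := by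
  classical
  have hB0 : 0 < B := by linarith
  set f := fWeighted t₀ t₁ s with hf
  set T := 2 * 4 ^ s * 4 ^ (2 * s) * B ^ (2 * f) with hT
  obtain ⟨N, hN, hlt⟩ := large_of_pressure h T 2
  rw [Z_eq, ENNReal.tsum_eq_iSup_sum, lt_iSup_iff] at hlt
  obtain ⟨F0, hF0⟩ := hlt
  rw [← ENNReal.ofReal_sum_of_nonneg fun i _ => by positivity] at hF0
  have hT2 := ENNReal.lt_ofReal_iff_toReal_lt ENNReal.ofReal_ne_top |>.1 hF0
  rw [ENNReal.toReal_ofReal (by positivity), ← Finset.mul_sum] at hT2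
  refine ⟨N, hN, F0.image fun a => [1, 1] ++ wd a, ?_, ?_⟩
  · intro l hl
    obtain ⟨a, -, rfl⟩ := Finset.mem_image.1 hl
    exact ⟨⟨wd a, wd_pos a, rfl⟩, by simp [wd_length]⟩
  · rw [Finset.sum_image]
    swap
    · intro a _ b _ hab
      have h1 : wd a = wd b := List.append_cancel_left hab
      have h2 := List.ofFn_injective h1
      funext i
      exact PNat.coe_injective (congrFun h2 i)
    have hterm : ∀ a : Fin N → ℕ+, (4:ℝ) ^ (-(2 * s)) * (Q (wd a) : ℝ) ^ (-(2 * s)) ≤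
        (Q ([1, 1] ++ wd a) : ℝ) ^ (-(2 * s)) := by
      intro a
      have hq : (0:ℝ) < Q (wd a) := by exact_mod_cast Q_pos (wd_pos a)
      have h11 : Pos [1, 1] := pos_two le_rfl le_rfl
      have hq2 : (0:ℝ) < Q ([1, 1] ++ wd a) := by
        exact_mod_cast Q_pos (pos_append.2 ⟨h11, wd_pos a⟩)
      rw [← Real.mul_rpow (by norm_num) hq.le]
      refine Real.rpow_le_rpow_of_nonpos hq2 ?_ (by linarith)
      have h3 := Q_append_le h11 (wd_pos a)
      have h4 : Q [1, 1] = 2 := by simp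
      rw [h4] at h3
      have h5 : Q ([1, 1] ++ wd a) ≤ 4 * Q (wd a) := by omega
      exact_mod_cast h5
    refine le_trans ?_ (Finset.sum_le_sum fun a _ => hterm a)
    rw [← Finset.mul_sum]
    set S := ∑ a ∈ F0, (Q (wd a) : ℝ) ^ (-(2 * s)) with hS
    have e1 : B ^ (((N + 2 : ℕ) : ℝ) * f) = B ^ ((N:ℝ) * f) * B ^ (2 * f) := by
      rw [← Real.rpow_add hB0]; congr 1; push_cast; ring
    have e2 : B ^ (-(N:ℝ) * f) = (B ^ ((N:ℝ) * f))⁻¹ := by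
      rw [← Real.rpow_neg hB0.le]; congr 1; ring
    rw [e2] at hT2
    have hp : 0 < B ^ ((N:ℝ) * f) := by positivity
    have hT3 : T * B ^ ((N:ℝ) * f) < S := by
      rwa [inv_mul_eq_div, lt_div_iff₀ hp] at hT2
    have e4 : (4:ℝ) ^ (-(2 * s)) = (4 ^ (2 * s))⁻¹ := Real.rpow_neg (by norm_num) _
    rw [e1, e4, inv_mul_eq_div, le_div_iff₀ (by positivity)]
    calc _ = T * B ^ ((N:ℝ) * f) := by rw [hT]; ring
      _ ≤ S := hT3.le

lemma pre_length {w : ℕ → List ℕ} {L : ℕ} (h : ∀ k, (w k).length = L) (k : ℕ) :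
    (pre w k).length = L * k := by
  induction k with
  | zero => simp [pre]
  | succ k ih => simp [pre, ih, h k]; ring

lemma marker_mem {t₀ t₁ B : ℝ} (ht₀ : 0 < t₀) (ht₁ : 0 < t₁) (hB : 1 < B) {N : ℕ}
    {κ δ : ℝ} (hκδ : κ * t₀ + δ * t₁ = 1) {w : ℕ → List ℕ}
    {α β : ℕ → ℕ} (hα : ∀ k, B ^ (κ * (((N + 2) * (k + 1) : ℕ) : ℝ)) ≤ α k)
    (hβ : ∀ k, B ^ (δ * (((N + 2) * (k + 1) : ℕ) : ℝ)) ≤ β k)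
    (hw : ∀ k, Blk (w k) ∧ (w k).length = N + 2)
    (hfr : ∃ᶠ k in atTop, w k ∈ MW N (α k) (β k)) : pt w ∈ DD t₀ t₁ B := by
  have hB0 : 0 < B := by linarith
  have hb : ∀ k, Blk (w k) := fun k => (hw k).1
  refine ⟨Icc_sub (pt_mem hb), pt_irr hb, ?_⟩
  rw [← Nat.frequently_atTop_iff_infinite, frequently_atTop]
  intro M
  obtain ⟨k, hk, hm⟩ := frequently_atTop.1 hfr M
  obtain ⟨a, b, h1, -, h3, -, e⟩ := mem_MW hm
  have hlen := pre_length (fun k => (hw k).2) k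
  have hy := Icc_sub (pt_mem (w := sh (k+1) w) fun j => hb _)
  have hpt := pt_sh hb (k+1)
  have hpos := pre_pos hb (k+1)
  set y := pt (sh (k+1) w)
  have ea : pre w (k+1) = (pre w k ++ List.replicate N 1) ++ a :: [b] := by
    show pre w k ++ w k = _
    rw [e]; simp [mkw]
  have eb : pre w (k+1) = (pre w k ++ List.replicate N 1 ++ [a]) ++ b :: [] := by
    show pre w k ++ w k = _
    rw [e]; simp [mkw]
  have pa : pq (pt w) ((N + 2) * k + N + 1) = a := by
    have := pq_phi (ea ▸ hpos) hy
    rw [← ea, ← hpt] at this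
    simpa [hlen] using this
  have pb : pq (pt w) ((N + 2) * k + N + 1 + 1) = b := by
    have := pq_phi (eb ▸ hpos) hy
    rw [← eb, ← hpt] at this
    simpa [hlen, add_assoc] using this
  refine ⟨(N + 2) * k + N + 1, by nlinarith, ?_⟩
  rw [pa, pb]
  set n := (N + 2) * (k + 1) with hn
  have ha : B ^ (κ * (n:ℝ)) ≤ a := (hα k).trans (by exact_mod_cast h1)
  have hbb : B ^ (δ * (n:ℝ)) ≤ b := (hβ k).trans (by exact_mod_cast h3)
  calc B ^ ((N + 2) * k + N + 1) ≤ B ^ n := pow_le_pow_right₀ hB.le (by rw [hn]; nlinarith)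
    _ = (B ^ (κ * (n:ℝ))) ^ t₀ * (B ^ (δ * (n:ℝ))) ^ t₁ := by
      rw [← Real.rpow_mul hB0.le, ← Real.rpow_mul hB0.le, ← Real.rpow_add hB0,
        ← Real.rpow_natCast]
      congr 1
      calc (n:ℝ) = n * (κ * t₀ + δ * t₁) := by rw [hκδ, mul_one]
        _ = _ := by ring
    _ ≤ _ := by gcongr

theorem lower_bound {t₀ t₁ B s : ℝ} (ht₀ : 0 < t₀) (ht₁ : 0 < t₁) (hB : 1 < B) (hs : 0 < s)
    (hs1 : s < 1)
    (h : ¬ Filter.atTop.limsup (fun n : ℕ => (((n : ℝ)⁻¹ : ℝ) : EReal) *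
      ENNReal.log (Z t₀ t₁ B s n)) ≤ 0) :
    ENNReal.ofReal s ≤ dimH (DD t₀ t₁ B) := by
  have hB0 : 0 < B := by linarith
  obtain ⟨κ, δ, hκ, hδ, hκδ, hf1, hf2⟩ := param_lower ht₀ ht₁ hs hs1
  have hf := fW_nonneg ht₀ ht₁ hs.le
  obtain ⟨N, hN, F, hF, hZ⟩ := free_exists hB hs h
  set f := fWeighted t₀ t₁ s with hfd
  set n : ℕ → ℕ := fun k => (N + 2) * (k + 1) with hn
  have hn0 : ∀ k, (0:ℝ) < n k := fun k => by simp only [hn]; positivity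
  set α : ℕ → ℕ := fun k => ⌈B ^ (κ * (n k : ℝ))⌉₊ with hα
  set β : ℕ → ℕ := fun k => ⌈B ^ (δ * (n k : ℝ))⌉₊ with hβ
  have hA1 : ∀ k, 1 ≤ B ^ (κ * (n k : ℝ)) := fun k =>
    Real.one_le_rpow hB.le (mul_nonneg hκ (hn0 k).le)
  have hB1 : ∀ k, 1 < B ^ (δ * (n k : ℝ)) := fun k =>
    Real.one_lt_rpow hB (mul_pos hδ (hn0 k))
  have da : ∀ k e, -1 ≤ e → e ≤ 1 → (α k : ℝ) ^ e ≤ 2 * B ^ (κ * (n k : ℝ) * e) := by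
    intro k e he he1
    have hc := ceil_bounds (hA1 k)
    rw [Real.rpow_mul hB0.le]
    exact rpow_double (by positivity) hc.1 hc.2 he he1
  have db : ∀ k e, -1 ≤ e → e ≤ 1 → (β k : ℝ) ^ e ≤ 2 * B ^ (δ * (n k : ℝ) * e) := by
    intro k e he he1
    have hc := ceil_bounds (hB1 k).le
    rw [Real.rpow_mul hB0.le]
    exact rpow_double (by positivity) hc.1 hc.2 he he1
  have dab : ∀ k e e', -1 ≤ e → e ≤ 1 → -1 ≤ e' → e' ≤ 1 → κ * e + δ * e' ≤ f →
      (α k : ℝ) ^ e * (β k : ℝ) ^ e' ≤ 4 * B ^ ((n k : ℝ) * f) := by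
    intro k e e' g1 g2 g3 g4 g5
    calc _ ≤ (2 * B ^ (κ * (n k : ℝ) * e)) * (2 * B ^ (δ * (n k : ℝ) * e')) :=
          mul_le_mul (da k e g1 g2) (db k e' g3 g4) (by positivity) (by positivity)
      _ = 4 * B ^ ((n k : ℝ) * (κ * e + δ * e')) := by
          rw [mul_mul_mul_comm, ← Real.rpow_add hB0]
          norm_num
          congr 1; ring
      _ ≤ _ := by
          have := mul_le_mul_of_nonneg_left g5 (hn0 k).le
          have := Real.rpow_le_rpow_of_exponent_le hB.le this
          linarith
  refine lower_core (N := N) (E0 := B ^ (((N + 2 : ℕ) : ℝ) * f)) hs hs1 hN α β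
    (fun k => B ^ ((n k : ℝ) * f)) ?_ ?_ (fun k => by positivity) ?_ ?_ ?_ ?_ ?_ F hF hZ _ ?_
  · intro k
    exact Nat.one_le_iff_ne_zero.2 (Nat.ceil_pos.2 (by linarith [hA1 k])).ne'
  · intro k
    exact Nat.lt_ceil.2 (by simpa using hB1 k)
  · exact Real.one_le_rpow hB.le (by positivity)
  · intro k
    rw [← Real.rpow_add hB0]
    congr 1
    simp only [hn]; push_cast; ring
  · intro k
    refine (da k s (by linarith) hs1.le).trans ?_
    gcongr 2 * ?_
    refine Real.rpow_le_rpow_of_exponent_le hB.le ?_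
    have := mul_le_mul_of_nonneg_left hf1 (hn0 k).le
    linarith
  · intro k
    exact dab k _ _ (by linarith) (by linarith) (by linarith) hs1.le (by linarith)
  · intro k
    rw [Real.mul_rpow (by positivity) (by positivity)]
    exact dab k _ _ (by linarith) (by linarith) (by linarith) (by linarith) (by nlinarith)
  · intro w hw hfr
    exact marker_mem ht₀ ht₁ hB hκδ (fun k => Nat.le_ceil _) (fun k => Nat.le_ceil _) hw hfr

theorem final (t₀ t₁ B : ℝ) (ht₀ : 0 < t₀) (ht₁ : 0 < t₁) (hB : 1 < B) :
    dimH (DD t₀ t₁ B) = ENNReal.ofReal (sInf {s : ℝ | 0 ≤ s ∧ s ≤ 1 ∧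
      Filter.atTop.limsup (fun n : ℕ =>
        (((n : ℝ)⁻¹ : ℝ) : EReal) * ENNReal.log (Z t₀ t₁ B s n)) ≤ 0}) := by
  set S := {s : ℝ | 0 ≤ s ∧ s ≤ 1 ∧ Filter.atTop.limsup (fun n : ℕ =>
        (((n : ℝ)⁻¹ : ℝ) : EReal) * ENNReal.log (Z t₀ t₁ B s n)) ≤ 0} with hS
  have h1S : (1:ℝ) ∈ S := ⟨zero_le_one, le_rfl, pressure_one ht₀ ht₁ hB⟩
  have hbdd : BddBelow S := ⟨0, fun s hs => hs.1⟩
  have hi0 : 0 ≤ sInf S := le_csInf ⟨1, h1S⟩ fun s hs => hs.1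
  have hi1 : sInf S ≤ 1 := csInf_le hbdd h1S
  apply le_antisymm
  · have hdim1 : dimH (DD t₀ t₁ B) ≤ 1 := by
      rw [← Real.dimH_univ]; exact dimH_mono (subset_univ _)
    rcases hi1.eq_or_lt with he | hlt
    · rw [he]; simpa using hdim1
    · have key : ∀ s', sInf S < s' → s' < 1 → dimH (DD t₀ t₁ B) ≤ ENNReal.ofReal s' := by
        intro s' h1 h2
        obtain ⟨s, hs, hss⟩ := exists_lt_of_csInf_lt ⟨1, h1S⟩ h1
        have hm := upper_measure ht₀ ht₁ hB hs.1 hss h2 hs.2.2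
        obtain ⟨r, hr⟩ : ∃ r : ℝ≥0, s' = (r : ℝ) := ⟨⟨s', by linarith⟩, rfl⟩
        rw [hr] at hm ⊢
        rw [ENNReal.ofReal_coe_nnreal]
        exact dimH_le_of_hausdorffMeasure_ne_top (by rw [hm]; exact ENNReal.zero_ne_top)
      have hc : Tendsto (fun s' : ℝ => ENNReal.ofReal s') (𝓝[>] (sInf S))
          (𝓝 (ENNReal.ofReal (sInf S))) :=
        (ENNReal.continuous_ofReal.tendsto _).mono_left nhdsWithin_le_nhds
      refine ge_of_tendsto hc ?_
      filter_upwards [Ioo_mem_nhdsGT hlt] with s' hs' using key s' hs'.1 hs'.2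
  · rcases hi0.eq_or_lt with he | hlt
    · rw [← he]; simp
    · have hc : Tendsto (fun s' : ℝ => ENNReal.ofReal s') (𝓝[<] (sInf S))
          (𝓝 (ENNReal.ofReal (sInf S))) :=
        (ENNReal.continuous_ofReal.tendsto _).mono_left nhdsWithin_le_nhds
      refine le_of_tendsto hc ?_
      filter_upwards [Ioo_mem_nhdsLT hlt] with s' hs'
      refine lower_bound ht₀ ht₁ hB hs'.1 (by linarith [hs'.2]) fun hp => ?_
      have := csInf_le hbdd (show s' ∈ S from ⟨hs'.1.le, by linarith [hs'.2], hp⟩)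
      linarith [hs'.2]

end BHKW

theorem bakhtawar_hussain_kleinbock_wang (t₀ t₁ B : ℝ)
    (ht₀ : 0 < t₀) (ht₁ : 0 < t₁) (hB : 1 < B) :
    dimH {x : ℝ | x ∈ Set.Ioo (0 : ℝ) 1 ∧ Irrational x ∧
      {n : ℕ | B ^ n ≤ (pq x n : ℝ) ^ t₀ * (pq x (n + 1) : ℝ) ^ t₁}.Infinite} =
    ENNReal.ofReal (sInf {s : ℝ | 0 ≤ s ∧ s ≤ 1 ∧
      Filter.atTop.limsup (fun n : ℕ =>
        (((n : ℝ)⁻¹ : ℝ) : EReal) * ENNReal.log (∑' a : Fin n → ℕ+,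
          ENNReal.ofReal (B ^ (-(n : ℝ) * fWeighted t₀ t₁ s) *
            ((contQ n fun i => (a i : ℕ)) : ℝ) ^ (-(2 * s))))) ≤ 0}) := by
  exact BHKW.final t₀ t₁ B ht₀ ht₁ hB
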